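/- (Lemma 2) There is a total computable map taking each pair (M, β) — where M is a nondeterministic 2-counter machine and β ∈ ℕ — to an MTL formula Φ_{M,β} such that: Φ_{M,β} has a model over ℝ≥0 under the continuous semantics whose variability is not bounded by β/1 if and only if counter v₀ exceeds β at some point of some computation of M. Consequently, since the bounded counter problem is Σ⁰₁-complete, the complement of the set B = {(φ, v, V) : every continuous-semantics model of φ over ℝ≥0 has variability bounded by v/V} is Σ⁰₁-hard, i.e., B is Π⁰₁-hard (coRE-hard). -/

import Mathlib

/-!
Both parts follow from one fact (`StackRed.exists_formula`): for every partial recursive function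
`g` there are formulas `Φ n`, computable from `n`, such that `Φ n` is satisfiable iff `g n` is
defined, and if it is satisfiable then for each `β` it has a model whose variability is not bounded
by `β/1`. For the first part, the pairs `(M, β)` such that `M` lets counter `v₀` exceed `β` form a
recursively enumerable set (`StackRed.overflows_re`: search through the finite lists of
nondeterministic choices), and `g` is taken to have this domain. For the second part, `g` is a
partial recursive function with domain the complement of the given Π⁰₁ set, and `n` is mapped to
`(Φ n, 0, 1)`: no timed word has variability bounded by `0/1`, so this triple is in `B` iff `Φ n`
is unsatisfiable.

To construct `Φ n`, `g` is computed by a fixed program with finitely many stacks (Mathlib's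
`Turing.PartrecToTM2`), whose elementary operations form a nondeterministic stack machine
(`StackRed.tmM`, `StackRed.tmM_acc_iff`). The formula `StackRed.runF` describes an accepting run of
this machine. The control state after `k` steps holds at time `k`, and the content of each stack
after `k` steps is the sequence of letters occurring in the open interval `(k, k + 1)`, top first.
Over the reals, `U_{[1,1]}` expresses that letters are copied exactly one time unit later, so all
stack actions can be expressed: a push demands a new letter in the next interval before the copies
of the old ones, and a pop demands that the first letter is not copied. An accepting configuration
must be met because the end marker, which has to occur at an integer time, is forbidden while the
current state is not final. Hence every model yields an accepting run (`StackRed.runF_sound`).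

Conversely (`StackRed.runF_complete`), a finite accepting run is laid out on the grid of multiples
of `1 / N`, each stack having its bottom in the last slot of the unit interval and growing
downwards in time, so that a content is copied verbatim from one interval to the next. Any `N` that
exceeds all stack heights works, and `N ≥ β` gives variability not bounded by `β/1`. Only the
initial stack content depends on `n`, and the code of the corresponding subformula is computed by
recursion on the binary digits of `n` (`StackRed.runF_computable`).
-/

/-- Intervals of the time domain with endpoints in `ℕ ∪ {∞}`. -/
structure Itv where
  lo : ℕ
  loOpen : Bool
  hi : Option ℕ
  hiOpen : Bool

/-- Membership of a real number in an interval. -/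
def Itv.mem (J : Itv) (x : ℝ) : Prop :=
  (if J.loOpen then (J.lo : ℝ) < x else (J.lo : ℝ) ≤ x) ∧
  (match J.hi with
   | none => True
   | some b => if J.hiOpen then x < (b : ℝ) else x ≤ (b : ℝ))

/-- MTL formulas, with atomic propositions drawn from `ℕ`. -/
inductive MTL where
  | tt : MTL
  | prop : ℕ → MTL
  | neg : MTL → MTL
  | conj : MTL → MTL → MTL
  | until_ : Itv → MTL → MTL → MTL

/-- Timed words over `ℝ≥0`: infinite sequences of (nonempty set of propositions,
timestamp) pairs, with `t 0 = 0`, strictly monotonic and divergent timestamps. -/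
structure TimedWord where
  σ : ℕ → Set ℕ
  t : ℕ → ℝ
  σ_nonempty : ∀ k, (σ k).Nonempty
  t_zero : t 0 = 0
  t_mono : StrictMono t
  t_div : ∀ x : ℝ, ∃ k, x < t k

/-- Continuous-semantics satisfaction relation `ω, x ⊨c φ`. -/
def csat (ω : TimedWord) : MTL → ℝ → Prop
  | .tt, _ => True
  | .prop p, x => ∃ k, ω.t k = x ∧ p ∈ ω.σ k
  | .neg φ, x => ¬ csat ω φ x
  | .conj φ ψ, x => csat ω φ x ∧ csat ω ψ x
  | .until_ J φ ψ, x =>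
      ∃ u, x < u ∧ J.mem (u - x) ∧ csat ω ψ u ∧ ∀ s, x < s → s < u → csat ω φ s

/-- `ω ⊨ φ` iff `ω, 0 ⊨c φ`. -/
def Models (ω : TimedWord) (φ : MTL) : Prop := csat ω φ 0

/-- `ω` has variability bounded by `v/V`: at most `v` positions in any closed
window of length `V`, i.e. `t (k+v) - t k > V` for all `k`. -/
def BddVar (ω : TimedWord) (v : ℕ) (V : ℝ) : Prop := ∀ k, V < ω.t (k + v) - ω.t k

/-- Effective code of an interval. -/
def Itv.code (J : Itv) : ℕ :=
  Nat.pair J.lo (Nat.pair (cond J.loOpen 1 0)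
    (Nat.pair (match J.hi with | none => 0 | some b => b + 1) (cond J.hiOpen 1 0)))

/-- A fixed effective encoding of MTL formulas as natural numbers. -/
def MTL.code : MTL → ℕ
  | .tt => Nat.pair 0 0
  | .prop p => Nat.pair 1 p
  | .neg φ => Nat.pair 2 φ.code
  | .conj φ ψ => Nat.pair 3 (Nat.pair φ.code ψ.code)
  | .until_ J φ ψ => Nat.pair 4 (Nat.pair J.code (Nat.pair φ.code ψ.code))
/-- `A ⊆ ℕ` is Σ⁰₁ (recursively enumerable): `A` is the domain of a partial
computable function. -/
def Sigma01 (A : Set ℕ) : Prop :=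
  ∃ f : ℕ →. ℕ, Nat.Partrec f ∧ ∀ n, n ∈ A ↔ (f n).Dom

/-- `A ⊆ ℕ` is Π⁰₁: its complement is Σ⁰₁. -/
def Pi01 (A : Set ℕ) : Prop := Sigma01 Aᶜ

/-- `A ⊆ ℕ` is Σ⁰₂: `n ∈ A ↔ ∃ a, ∀ b, R n a b` for a decidable relation `R`. -/
def Sigma02 (A : Set ℕ) : Prop :=
  ∃ R : ℕ → ℕ → ℕ → Bool, Computable (fun p : ℕ × ℕ × ℕ => R p.1 p.2.1 p.2.2) ∧
    ∀ n, n ∈ A ↔ ∃ a, ∀ b, R n a b = true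

/-- `A` many-one reduces to `B`: there is a total computable `f` with
`n ∈ A ↔ f n ∈ B` for all `n`. -/
def ManyOneRed (A B : Set ℕ) : Prop :=
  ∃ f : ℕ → ℕ, Computable f ∧ ∀ n, n ∈ A ↔ f n ∈ B
/-- Every continuous-semantics model of `φ` over `ℝ≥0` has variability bounded
by `v/V`. -/
def BVtriple (φ : MTL) (v V : ℕ) : Prop :=
  ∀ ω : TimedWord, Models ω φ → BddVar ω v (V : ℝ)

/-- The set `B` of (codes of) triples `(φ, v, V)` such that every
continuous-semantics model of `φ` over `ℝ≥0` has variability bounded by `v/V`. -/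
def Bset : Set ℕ :=
  {n | ∃ (φ : MTL) (v V : ℕ), n = Nat.pair φ.code (Nat.pair v V) ∧ BVtriple φ v V}
/-- Instructions of nondeterministic counter machines. -/
inductive Instr where
  | halt : Instr
  | inc : ℕ → Instr
  | dec : ℕ → Instr
  | branch : ℕ → ℕ → ℕ → Instr
deriving DecidableEq

/-- A nondeterministic counter machine: a number of counters together with a
finite list of instructions `ℓ₀, …, ℓ_m`. -/
structure CM where
  numCounters : ℕ
  prog : List Instr

/-- Counters mentioned by an instruction. -/
def Instr.counters : Instr → List ℕ
  | .halt => []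
  | .inc k => [k]
  | .dec k => [k]
  | .branch k _ _ => [k]

/-- Well-formedness: instructions only mention the machine's counters, and the
instruction `halt` occurs exactly once in the program. -/
def CM.WellFormed (M : CM) : Prop :=
  (∀ i ∈ M.prog, ∀ k ∈ i.counters, k < M.numCounters) ∧
    M.prog.count Instr.halt = 1

/-- A configuration: current location and counter contents. -/
structure Config where
  loc : ℕ
  cnt : ℕ → ℕ

/-- The initial configuration: location `ℓ₀`, all counters equal to `0`. -/
def initConfig : Config := ⟨0, fun _ => 0⟩

/-- One nondeterministic computation step. `halt` has no successor, and
decrementing a zero counter is undefined (no successor). -/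
def Step (M : CM) (c c' : Config) : Prop :=
  match M.prog[c.loc]? with
  | none => False
  | some .halt => False
  | some (.inc k) => c' = ⟨c.loc + 1, Function.update c.cnt k (c.cnt k + 1)⟩
  | some (.dec k) => 0 < c.cnt k ∧ c' = ⟨c.loc + 1, Function.update c.cnt k (c.cnt k - 1)⟩
  | some (.branch k i j) =>
      (c.cnt k ≠ 0 ∧ (c' = ⟨i, c.cnt⟩ ∨ c' = ⟨j, c.cnt⟩)) ∨
        (c.cnt k = 0 ∧ c' = ⟨c.loc + 1, c.cnt⟩)

/-- `c` occurs at some point of some computation of `M`. -/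
def Reaches (M : CM) (c : Config) : Prop :=
  Relation.ReflTransGen (Step M) initConfig c

/-- Counter `v₀` exceeds `β` at some point of some computation of `M`. -/
def Overflows (M : CM) (β : ℕ) : Prop := ∃ c, Reaches M c ∧ β < c.cnt 0

/-- Some computation of `M` reaches the `halt` instruction. -/
def Halts (M : CM) : Prop := ∃ c, Reaches M c ∧ M.prog[c.loc]? = some Instr.halt

/-- An infinite computation of `M`. -/
def IsInfRun (M : CM) (ρ : ℕ → Config) : Prop :=
  ρ 0 = initConfig ∧ ∀ k, Step M (ρ k) (ρ (k + 1))

/-- A (finite or infinite) computation of `M`, presented as an infinite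
sequence that stutters forever once no step is possible. -/
def IsComp (M : CM) (ρ : ℕ → Config) : Prop :=
  ρ 0 = initConfig ∧
    ∀ k, Step M (ρ k) (ρ (k + 1)) ∨ ((¬ ∃ c, Step M (ρ k) c) ∧ ρ (k + 1) = ρ k)

/-- Effective code of an instruction. -/
def Instr.code : Instr → ℕ
  | .halt => Nat.pair 0 0
  | .inc k => Nat.pair 1 k
  | .dec k => Nat.pair 2 k
  | .branch k i j => Nat.pair 3 (Nat.pair k (Nat.pair i j))

/-- Effective code of a list of naturals. -/
def listCode : List ℕ → ℕ
  | [] => 0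
  | a :: l => Nat.pair a (listCode l) + 1

/-- A fixed effective encoding of counter machines as natural numbers. -/
def CM.code (M : CM) : ℕ :=
  Nat.pair M.numCounters (listCode (M.prog.map Instr.code))

namespace StackRed

open Relation

set_option linter.unusedSectionVars false

/-! ### Derived MTL connectives -/

/-- The interval `[0, ∞)`; since `until_` is strict it imposes no constraint. -/
def anyI : Itv := ⟨0, false, none, false⟩

/-- The singleton interval `[1, 1]`. -/
def oneI : Itv := ⟨1, false, some 1, false⟩

/-- `φ` holds exactly one time unit later. -/
def nx (φ : MTL) : MTL := .until_ oneI .tt φ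

/-- Untimed strict until. -/
def unt (φ ψ : MTL) : MTL := .until_ anyI φ ψ

/-- Implication. -/
def imp (φ ψ : MTL) : MTL := .neg (.conj φ (.neg ψ))

/-- Equivalence. -/
def equ (φ ψ : MTL) : MTL := .conj (imp φ ψ) (imp ψ φ)

/-- `φ` holds now and at all later times. -/
def glob (φ : MTL) : MTL := .conj φ (.neg (unt .tt (.neg φ)))

/-- `φ` holds now or at some later time. -/
def ev (φ : MTL) : MTL := .neg (glob (.neg φ))

/-- Conjunction of a finite family. -/
noncomputable def bigAnd {ι : Type} [Finite ι] (f : ι → MTL) : MTL :=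
  ((@Finset.univ ι (Fintype.ofFinite ι)).toList.map f).foldr .conj .tt

/-- Disjunction of a finite family. -/
noncomputable def bigOr {ι : Type} [Finite ι] (f : ι → MTL) : MTL :=
  .neg (bigAnd fun i => .neg (f i))

section csat
variable {ω : TimedWord} {φ ψ : MTL} {x : ℝ}

theorem csat_tt : csat ω .tt x ↔ True := Iff.rfl
theorem csat_neg : csat ω (.neg φ) x ↔ ¬ csat ω φ x := Iff.rfl
theorem csat_conj : csat ω (.conj φ ψ) x ↔ csat ω φ x ∧ csat ω ψ x := Iff.rfl

theorem csat_unt : csat ω (unt φ ψ) x ↔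
    ∃ u, x < u ∧ csat ω ψ u ∧ ∀ s, x < s → s < u → csat ω φ s := by
  simp only [unt, csat, anyI, Itv.mem]
  refine exists_congr fun u => and_congr_right fun h => ?_
  have : (0:ℝ) ≤ u - x := by linarith
  simp [this]

theorem oneI_mem {y : ℝ} : oneI.mem y ↔ y = 1 := by
  simp only [oneI, Itv.mem]
  constructor
  · rintro ⟨h1, h2⟩
    simp at h1 h2
    linarith
  · rintro rfl; simp

theorem csat_untOne : csat ω (.until_ oneI φ ψ) x ↔
    csat ω ψ (x + 1) ∧ ∀ s, x < s → s < x + 1 → csat ω φ s := by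
  simp only [csat, oneI_mem]
  constructor
  · rintro ⟨u, _, h, h1, h2⟩
    obtain rfl : u = x + 1 := by linarith
    exact ⟨h1, h2⟩
  · rintro ⟨h1, h2⟩
    exact ⟨x + 1, by linarith, by ring, h1, h2⟩

theorem csat_nx : csat ω (nx φ) x ↔ csat ω φ (x + 1) := by
  rw [nx, csat_untOne]
  exact ⟨fun h => h.1, fun h => ⟨h, fun _ _ _ => trivial⟩⟩

theorem csat_imp : csat ω (imp φ ψ) x ↔ (csat ω φ x → csat ω ψ x) := by
  simp only [imp, csat_neg, csat_conj, not_and, not_not]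

theorem csat_equ : csat ω (equ φ ψ) x ↔ (csat ω φ x ↔ csat ω ψ x) := by
  simp only [equ, csat_conj, csat_imp]
  exact iff_iff_implies_and_implies.symm

theorem csat_glob : csat ω (glob φ) x ↔ ∀ y, x ≤ y → csat ω φ y := by
  simp only [glob, csat_conj, csat_neg, csat_unt, csat_tt]
  push Not
  constructor
  · rintro ⟨h0, h1⟩ y hy
    rcases hy.eq_or_lt with rfl | hy
    · exact h0
    · by_contra hc
      simpa using h1 y hy hc
  · intro h
    exact ⟨h x le_rfl, fun u hu hc => absurd (h u hu.le) hc⟩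

theorem csat_ev : csat ω (ev φ) x ↔ ∃ y, x ≤ y ∧ csat ω φ y := by
  simp only [ev, csat_neg, csat_glob]
  push Not
  rfl

theorem csat_bigAnd {ι : Type} [Finite ι] {f : ι → MTL} :
    csat ω (bigAnd f) x ↔ ∀ i, csat ω (f i) x := by
  have key : ∀ l : List MTL, csat ω (l.foldr .conj .tt) x ↔ ∀ φ ∈ l, csat ω φ x := by
    intro l
    induction l with
    | nil => simp [csat_tt]
    | cons a l ih => simp [csat_conj, ih]
  simp [bigAnd, key]

theorem csat_bigOr {ι : Type} [Finite ι] {f : ι → MTL} :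
    csat ω (bigOr f) x ↔ ∃ i, csat ω (f i) x := by
  simp [bigOr, csat_bigAnd, csat_neg]

end csat

/-! ### Nondeterministic stack machines -/

/-- Actions on a single stack; the head of the list is the top of the stack. -/
inductive Act (Γ : Type)
  | keep
  | empty
  | top (a : Γ)
  | pop (a : Γ)
  | push (a : Γ)

instance {Γ : Type} [Finite Γ] : Finite (Act Γ) := by
  let f : Option (Option (Γ ⊕ Γ ⊕ Γ)) → Act Γ
    | none => .keep
    | some none => .empty
    | some (some (.inl a)) => .top a
    | some (some (.inr (.inl a))) => .pop a
    | some (some (.inr (.inr a))) => .push a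
  refine Finite.of_surjective f fun b => ?_
  cases b with
  | keep => exact ⟨none, rfl⟩
  | empty => exact ⟨some none, rfl⟩
  | top a => exact ⟨some (some (.inl a)), rfl⟩
  | pop a => exact ⟨some (some (.inr (.inl a))), rfl⟩
  | push a => exact ⟨some (some (.inr (.inr a))), rfl⟩

/-- The relation between old and new stack content described by an action. -/
def Act.rel {Γ : Type} : Act Γ → List Γ → List Γ → Prop
  | .keep, l, l' => l' = l
  | .empty, l, l' => l = [] ∧ l' = []
  | .top a, l, l' => l' = l ∧ ∃ t, l = a :: t
  | .pop a, l, l' => l = a :: l'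
  | .push a, l, l' => l' = a :: l

/-- A nondeterministic machine with stacks indexed by `K` over the alphabet `Γ` and with
control states `Q`. Each transition acts on one stack and leaves the others unchanged. -/
structure Mach (Q K Γ : Type) where
  trans : Q → K → Act Γ → Q → Prop
  final : Q → Prop

open Classical in
/-- The action performed on stack `j` by a transition that performs `b` on stack `k`. -/
noncomputable def actAt {K Γ : Type} (k : K) (b : Act Γ) (j : K) : Act Γ :=
  if j = k then b else .keep

/-- The one-step relation of a stack machine. -/
def Mach.Stp {Q K Γ : Type} (M : Mach Q K Γ) (c c' : Q × (K → List Γ)) : Prop :=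
  ∃ k b, M.trans c.1 k b c'.1 ∧ ∀ j, (actAt k b j).rel (c.2 j) (c'.2 j)

/-- Some run from `c` reaches a final control state. -/
def Mach.Acc {Q K Γ : Type} (M : Mach Q K Γ) (c : Q × (K → List Γ)) : Prop :=
  ∃ c', ReflTransGen M.Stp c c' ∧ M.final c'.1

/-! ### The formula describing an accepting run -/

/-- Names of the atomic propositions: `0` is a dummy that is never mentioned by the formula,
`1` marks the integer times, `2` marks the end of the run; then come the letters of each
stack and the control states. -/
abbrev PN (Q K Γ : Type) := Fin 3 ⊕ (K × Γ) ⊕ Q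

section formula
variable {Q K Γ : Type} [Finite Q] [Finite K] [Finite Γ] (e : PN Q K Γ → ℕ) (M : Mach Q K Γ)

/-- The proposition marking integer times. -/
def tickF : MTL := .prop (e (.inl 1))

/-- The proposition marking the end of the run. -/
def finF : MTL := .prop (e (.inl 2))

/-- Letter `a` of stack `j`. -/
def letF (j : K) (a : Γ) : MTL := .prop (e (.inr (.inl (j, a))))

/-- Control state `q`. -/
def staF (q : Q) : MTL := .prop (e (.inr (.inr q)))

/-- No letter of stack `j`. -/
noncomputable def noF (j : K) : MTL := bigAnd fun a => .neg (letF e j a)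

open Classical in
/-- The letter `a` of stack `j` and no other letter of this stack. -/
noncomputable def exF (j : K) (a : Γ) : MTL :=
  bigAnd fun b => if b = a then letF e j b else .neg (letF e j b)

/-- Stack `j` has the same letters now and one time unit later. -/
noncomputable def cpF (j : K) : MTL := bigAnd fun a => equ (letF e j a) (nx (letF e j a))

/-- The content of stack `j` is copied verbatim from now up to the next integer time. -/
noncomputable def cpT (j : K) : MTL := unt (cpF e j) (tickF e)

/-- The effect of an action on stack `j`, to be evaluated at integer times. The stack is
stored in the open unit interval that follows, top first. -/
noncomputable def actF (j : K) : Act Γ → MTL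
  | .keep => cpT e j
  | .empty => unt (.conj (noF e j) (nx (noF e j))) (tickF e)
  | .top a => .conj (cpT e j)
      (unt (.conj (noF e j) (.neg (tickF e))) (.conj (letF e j a) (.neg (tickF e))))
  | .pop a => unt (.conj (.neg (tickF e)) (.conj (noF e j) (nx (noF e j))))
      (.conj (.neg (tickF e)) (.conj (letF e j a) (.conj (nx (noF e j)) (cpT e j))))
  | .push a => unt (.conj (.neg (tickF e)) (.conj (noF e j) (nx (noF e j))))
      (.conj (.neg (tickF e)) (.conj (noF e j) (.conj (nx (exF e j a)) (cpT e j))))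

open Classical in
/-- Control: a non-final state is not at the end of the run and is followed by a legal
transition. -/
noncomputable def ctlF : MTL :=
  bigAnd fun q : Q => imp (staF e q) (if M.final q then .tt else
    .conj (.neg (finF e))
      (bigOr fun t : {t : K × Act Γ × Q // M.trans q t.1 t.2.1 t.2.2} =>
        .conj (bigAnd fun j => actF e j (actAt t.1.1 t.1.2.1 j)) (nx (staF e t.1.2.2))))

/-- The proposition `tick` holds exactly at the integer times. -/
noncomputable def clkF : MTL :=
  .conj (tickF e) (glob (imp (tickF e) (.until_ oneI (.neg (tickF e)) (tickF e))))

/-- From now up to the next integer time, stack `j` reads the given word. -/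
noncomputable def wordF (j : K) : List Γ → MTL
  | [] => unt (noF e j) (tickF e)
  | a :: l => unt (.conj (.neg (tickF e)) (noF e j))
      (.conj (.conj (.neg (tickF e)) (exF e j a)) (wordF j l))

/-- The part of the formula independent of the input. -/
noncomputable def restF (q0 : Q) (j0 : K) : MTL :=
  .conj (clkF e) (.conj (glob (ctlF e M)) (.conj (ev (.conj (tickF e) (finF e)))
    (.conj (staF e q0) (bigAnd fun j : {j : K // j ≠ j0} => wordF e j.1 []))))

/-- `M` has an accepting run from state `q0` with `l` on stack `j0` and all other stacks
empty. -/
noncomputable def runF (q0 : Q) (j0 : K) (l : List Γ) : MTL :=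
  .conj (wordF e j0 l) (restF e M q0 j0)

end formula

/-! ### Models of the formula yield accepting runs -/

/-- The word read off the open interval `(x, y)` is the given list, where `h a s` says that
letter `a` is present at time `s`. -/
def Enc {Γ : Type} (h : Γ → ℝ → Prop) (y : ℝ) : List Γ → ℝ → Prop
  | [], x => ∀ s, x < s → s < y → ∀ a, ¬ h a s
  | a :: l, x => ∃ u, x < u ∧ u < y ∧ (∀ b, h b u ↔ b = a) ∧
      (∀ s, x < s → s < u → ∀ b, ¬ h b s) ∧ Enc h y l u

section enc
variable {Γ : Type} {h : Γ → ℝ → Prop} {x y u : ℝ} {l : List Γ}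

theorem Enc.copy (hc : ∀ s, x < s → s < y → ∀ a, h a s ↔ h a (s + 1)) (he : Enc h y l x) :
    Enc h (y + 1) l (x + 1) := by
  induction l generalizing x with
  | nil =>
    intro s h1 h2 a ha
    refine he (s - 1) (by linarith) (by linarith) a ?_
    rw [hc _ (by linarith) (by linarith)]
    simpa using ha
  | cons a l ih =>
    obtain ⟨u, h1, h2, h3, h4, h5⟩ := he
    refine ⟨u + 1, by linarith, by linarith, fun b => ?_, fun s hs1 hs2 b hb => ?_, ?_⟩
    · rw [← h3, hc u h1 h2]
    · refine h4 (s - 1) (by linarith) (by linarith) b ?_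
      rw [hc _ (by linarith) (by linarith)]
      simpa using hb
    · exact ih (fun s hs => hc s (by linarith)) h5

theorem Enc.shrink (hn : ∀ s, x < s → s ≤ u → ∀ a, ¬ h a s) (hx : x ≤ u) (he : Enc h y l x) :
    Enc h y l u := by
  cases l with
  | nil => exact fun s h1 h2 => he s (by linarith) h2
  | cons a l =>
    obtain ⟨v, h1, h2, h3, h4, h5⟩ := he
    refine ⟨v, ?_, h2, h3, fun s hs => h4 s (by linarith), h5⟩
    by_contra hc
    exact hn v h1 (not_lt.1 hc) a ((h3 a).2 rfl)

theorem Enc.extend (hn : ∀ s, x < s → s ≤ u → ∀ a, ¬ h a s) (hx : x ≤ u) (he : Enc h y l u) :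
    Enc h y l x := by
  cases l with
  | nil =>
    intro s h1 h2 a
    rcases le_or_gt s u with h | h
    · exact hn s h1 h a
    · exact he s h h2 a
  | cons a l =>
    obtain ⟨v, h1, h2, h3, h4, h5⟩ := he
    refine ⟨v, by linarith, h2, h3, fun s hs1 hs2 b => ?_, h5⟩
    rcases le_or_gt s u with h | h
    · exact hn s hs1 h b
    · exact h4 s h hs2 b

/-- If `a` is present at the first time `u` at which any letter occurs, then `a` is the first
letter of the word. -/
theorem Enc.first {a : Γ} (hx : x < u) (hu : u < y) (ha : h a u)
    (hn : ∀ s, x < s → s < u → ∀ a, ¬ h a s) (he : Enc h y l x) :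
    ∃ t, l = a :: t ∧ Enc h y t u := by
  cases l with
  | nil => exact absurd ha (he u hx hu a)
  | cons b l =>
    obtain ⟨v, h1, h2, h3, h4, h5⟩ := he
    rcases lt_trichotomy u v with h | h | h
    · exact absurd ha (h4 u hx h a)
    · subst h
      obtain rfl := (h3 a).1 ha
      exact ⟨l, rfl, h5⟩
    · exact absurd ((h3 b).2 rfl) (hn v h1 h b)

end enc

section sound
variable {Q K Γ : Type} [Finite Q] [Finite K] [Finite Γ] {e : PN Q K Γ → ℕ} {M : Mach Q K Γ}
  {ω : TimedWord}

/-- Presence of letters of stack `j` in a timed word. -/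
def Pres (e : PN Q K Γ → ℕ) (ω : TimedWord) (j : K) (a : Γ) (s : ℝ) : Prop :=
  csat ω (letF e j a) s

theorem csat_noF {j : K} {s : ℝ} : csat ω (noF e j) s ↔ ∀ a, ¬ Pres e ω j a s := by
  simp [noF, csat_bigAnd, csat_neg, Pres]

theorem csat_exF {j : K} {a : Γ} {s : ℝ} :
    csat ω (exF e j a) s ↔ ∀ b, Pres e ω j b s ↔ b = a := by
  rw [exF, csat_bigAnd]
  refine forall_congr' fun b => ?_
  by_cases h : b = a <;> simp [h, csat_neg, Pres]

theorem csat_cpF {j : K} {s : ℝ} :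
    csat ω (cpF e j) s ↔ ∀ a, Pres e ω j a s ↔ Pres e ω j a (s + 1) := by
  simp [cpF, csat_bigAnd, csat_equ, csat_nx, Pres]

/-- If `tick` holds at `y`, an until that forbids `tick` along the way is resolved
before `y`. -/
theorem lt_of_noTick {x y u : ℝ} {P : ℝ → Prop} (hy : csat ω (tickF e) y) (hxy : x < y)
    (hu : ¬ csat ω (tickF e) u)
    (h : ∀ s, x < s → s < u → ¬ csat ω (tickF e) s ∧ P s) : u < y := by
  by_contra hc
  rcases (not_lt.1 hc).eq_or_lt with rfl | hc
  · exact hu hy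
  · exact (h y hxy hc).1 hy

theorem untTick {x y : ℝ} {φ : MTL} (hn : ∀ s, x < s → s < y → ¬ csat ω (tickF e) s)
    (h : csat ω (unt φ (tickF e)) x) : ∀ s, x < s → s < y → csat ω φ s := by
  obtain ⟨u, h1, h2, h3⟩ := csat_unt.1 h
  intro s hs1 hs2
  refine h3 s hs1 (lt_of_lt_of_le hs2 ?_)
  by_contra hc
  exact hn u h1 (not_le.1 hc) h2

theorem actF_sound {x : ℝ} {j : K} {b : Act Γ} {l : List Γ}
    (ht : csat ω (tickF e) (x + 1)) (hn : ∀ s, x < s → s < x + 1 → ¬ csat ω (tickF e) s)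
    (hl : Enc (Pres e ω j) (x + 1) l x) (hb : csat ω (actF e j b) x) :
    ∃ l', b.rel l l' ∧ Enc (Pres e ω j) (x + 1 + 1) l' (x + 1) := by
  cases b with
  | keep =>
    exact ⟨l, rfl, hl.copy fun s h1 h2 => csat_cpF.1 (untTick hn hb s h1 h2)⟩
  | empty =>
    have h := untTick hn hb
    simp only [csat_conj, csat_nx, csat_noF] at h
    have hl0 : l = [] := by
      cases l with
      | nil => rfl
      | cons a l =>
        obtain ⟨u, h1, h2, h3, -⟩ := hl
        exact absurd ((h3 a).2 rfl) ((h u h1 h2).1 a)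
    refine ⟨[], ⟨hl0, rfl⟩, fun s h1 h2 a ha => ?_⟩
    refine (h (s - 1) (by linarith) (by linarith)).2 a ?_
    simpa using ha
  | top a =>
    obtain ⟨hc, hb⟩ := hb
    obtain ⟨u, h1, ⟨h2, h2'⟩, h3⟩ := csat_unt.1 hb
    have hu : u < x + 1 := lt_of_noTick ht (by linarith) h2' fun s hs1 hs2 =>
      ⟨(h3 s hs1 hs2).2, (h3 s hs1 hs2).1⟩
    obtain ⟨t, rfl, -⟩ := hl.first (h := Pres e ω j) h1 hu h2 fun s hs1 hs2 => csat_noF.1 (h3 s hs1 hs2).1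
    exact ⟨_, ⟨rfl, t, rfl⟩, hl.copy fun s h1 h2 => csat_cpF.1 (untTick hn hc s h1 h2)⟩
  | pop a =>
    obtain ⟨u, h1, ⟨h2, h4, h5, h6⟩, h3⟩ := csat_unt.1 hb
    have hu : u < x + 1 := lt_of_noTick ht (by linarith) h2 h3
    obtain ⟨t, rfl, ht'⟩ := hl.first (h := Pres e ω j) h1 hu h4 fun s hs1 hs2 => csat_noF.1 (h3 s hs1 hs2).2.1
    refine ⟨t, rfl, Enc.extend (u := u + 1) ?_ (by linarith) (ht'.copy fun s h1' h2' =>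
      csat_cpF.1 (untTick (fun s hs => hn s (by linarith)) h6 s h1' h2'))⟩
    intro s hs1 hs2
    rcases hs2.eq_or_lt with rfl | hs2
    · exact csat_noF.1 (csat_nx.1 h5)
    · have := csat_noF.1 (csat_nx.1 (h3 (s - 1) (by linarith) (by linarith)).2.2)
      simpa using this
  | push a =>
    obtain ⟨u, h1, ⟨h2, h4, h5, h6⟩, h3⟩ := csat_unt.1 hb
    have hu : u < x + 1 := lt_of_noTick ht (by linarith) h2 h3
    refine ⟨a :: l, rfl, u + 1, by linarith, by linarith, csat_exF.1 (csat_nx.1 h5), ?_, ?_⟩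
    · intro s hs1 hs2
      have := csat_noF.1 (csat_nx.1 (h3 (s - 1) (by linarith) (by linarith)).2.2)
      simpa using this
    · refine Enc.copy (fun s h1' h2' =>
        csat_cpF.1 (untTick (fun s hs => hn s (by linarith)) h6 s h1' h2')) ?_
      refine hl.shrink (fun s hs1 hs2 => ?_) h1.le
      rcases hs2.eq_or_lt with rfl | hs2
      · exact csat_noF.1 h4
      · exact csat_noF.1 (h3 s hs1 hs2).2.1

theorem wordF_sound {x y : ℝ} {j : K} {l : List Γ} (ht : csat ω (tickF e) y) (hxy : x < y)
    (hn : ∀ s, x < s → s < y → ¬ csat ω (tickF e) s) (h : csat ω (wordF e j l) x) :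
    Enc (Pres e ω j) y l x := by
  induction l generalizing x with
  | nil => exact fun s h1 h2 => csat_noF.1 (untTick hn h s h1 h2)
  | cons a l ih =>
    obtain ⟨u, h1, ⟨⟨h2, h4⟩, h5⟩, h3⟩ := csat_unt.1 h
    have hu : u < y := lt_of_noTick ht hxy h2 h3
    exact ⟨u, h1, hu, csat_exF.1 h4, fun s hs1 hs2 => csat_noF.1 (h3 s hs1 hs2).2,
      ih hu (fun s hs => hn s (by linarith)) h5⟩

theorem clkF_sound (h : csat ω (clkF e) 0) (k : ℕ) : csat ω (tickF e) k ∧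
    ∀ s, (k : ℝ) < s → s < k + 1 → ¬ csat ω (tickF e) s := by
  obtain ⟨h0, h1⟩ := h
  rw [csat_glob] at h1
  have h1' : ∀ k : ℕ, csat ω (tickF e) k → csat ω (tickF e) ((k : ℝ) + 1) ∧
      ∀ s, (k : ℝ) < s → s < k + 1 → ¬ csat ω (tickF e) s := fun k hk =>
    csat_untOne.1 (csat_imp.1 (h1 k (Nat.cast_nonneg k)) hk)
  have h2 : ∀ k : ℕ, csat ω (tickF e) k := by
    intro k
    induction k with
    | zero => simpa using h0
    | succ k ih => simpa using (h1' k ih).1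
  exact ⟨h2 k, (h1' k (h2 k)).2⟩

open Classical in
/-- A run read off a model is accepting: the end marker occurs at some integer time `m`, and as
it is forbidden at non-final states, the run meets a final state within `m` steps. -/
theorem runF_sound {q0 : Q} {j0 : K} {l : List Γ} (h : csat ω (runF e M q0 j0 l) 0) :
    M.Acc (q0, Function.update (fun _ => []) j0 l) := by
  obtain ⟨hw, hclk, hctl, hfin, hq0, hw0⟩ := h
  have clk := clkF_sound hclk
  rw [csat_glob] at hctl
  have tick1 : ∀ k : ℕ, csat ω (tickF e) ((k : ℝ) + 1) := fun k => by
    simpa using (clk (k + 1)).1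
  by_contra hacc
  -- As no accepting configuration is reachable, the word describes an infinite run.
  have inv : ∀ k : ℕ, ∃ c : Q × (K → List Γ),
      ReflTransGen M.Stp (q0, Function.update (fun _ => []) j0 l) c ∧ csat ω (staF e c.1) k ∧
      ∀ j, Enc (Pres e ω j) ((k : ℝ) + 1) (c.2 j) k := by
    intro k
    induction k with
    | zero =>
      refine ⟨_, .refl, by simpa using hq0, fun j => ?_⟩
      have hn := (clk 0).2
      have ht := tick1 0
      simp only [Nat.cast_zero] at hn ht ⊢
      refine wordF_sound ht (by norm_num) hn ?_
      by_cases hj : j = j0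
      · subst hj; simpa using hw
      · simpa [hj] using (csat_bigAnd.1 hw0) ⟨j, hj⟩
    | succ k ih =>
      obtain ⟨c, hc, hq, hE⟩ := ih
      have h1 := csat_imp.1 (csat_bigAnd.1 (hctl k (Nat.cast_nonneg k)) c.1) hq
      have hnf : ¬ M.final c.1 := fun hf => hacc ⟨c, hc, hf⟩
      rw [if_neg hnf] at h1
      obtain ⟨⟨⟨k', b, q'⟩, htr⟩, hact, hst⟩ := csat_bigOr.1 h1.2
      rw [csat_bigAnd] at hact
      choose S' hS1 hS2 using fun j => actF_sound (tick1 k) (clk k).2 (hE j) (hact j)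
      refine ⟨(q', S'), hc.tail ⟨k', b, htr, hS1⟩, ?_, ?_⟩
      · simpa using csat_nx.1 hst
      · simpa using hS2
  obtain ⟨u, hu, hut, huf⟩ := csat_ev.1 hfin
  obtain ⟨k, hk⟩ : ∃ k : ℕ, u = k := by
    refine ⟨⌊u⌋₊, ?_⟩
    by_contra hne
    have h1 := Nat.floor_le hu
    exact (clk ⌊u⌋₊).2 u (lt_of_le_of_ne h1 (Ne.symm hne)) (Nat.lt_floor_add_one u) hut
  subst hk
  obtain ⟨c, hc, hq, -⟩ := inv k
  have h1 := csat_imp.1 (csat_bigAnd.1 (hctl k (Nat.cast_nonneg k)) c.1) hq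
  rw [if_neg fun hf => hacc ⟨c, hc, hf⟩] at h1
  exact h1.1 huf

end sound

/-! ### Accepting runs yield models of arbitrarily high variability -/

/-- The layout of a stack in a unit interval divided into `N` slots: the bottom of the stack is
in slot `N - 1`, and the stack grows towards slot `1`. -/
def Slot {Γ : Type} (N : ℕ) (l : List Γ) (a : Γ) (y : ℝ) : Prop :=
  ∃ i : ℕ, 0 < i ∧ i < N ∧ y * N = i ∧ l.reverse[N - 1 - i]? = some a

section slot
variable {Γ : Type} {N : ℕ} {l : List Γ} {a b : Γ} {y : ℝ}

theorem not_slot_nil : ¬ Slot N [] a y := by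
  rintro ⟨i, -, -, -, h⟩
  simp at h

theorem slot_ge (h : Slot N l a y) : (N : ℝ) - l.length ≤ y * N := by
  obtain ⟨i, h1, h2, h3, h4⟩ := h
  have h5 : N - 1 - i < l.length := by
    have := (List.getElem?_eq_some_iff.1 h4).1
    simpa using this
  have h6 : N ≤ i + l.length := by omega
  have h7 : (N : ℝ) ≤ i + l.length := by exact_mod_cast h6
  rw [h3]; linarith

theorem slot_cons (hl : l.length + 1 < N) :
    Slot N (a :: l) b y ↔ Slot N l b y ∨ (b = a ∧ y * N = N - (l.length + 1)) := by
  have hc : ((N - (l.length + 1) : ℕ) : ℝ) = N - (l.length + 1) := by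
    push_cast [Nat.cast_sub hl.le]; ring
  constructor
  · rintro ⟨i, h1, h2, h3, h4⟩
    rw [List.reverse_cons] at h4
    by_cases hi : N - 1 - i < l.length
    · left
      rw [List.getElem?_append_left (by simpa using hi)] at h4
      exact ⟨i, h1, h2, h3, h4⟩
    · right
      have h5 := (List.getElem?_eq_some_iff.1 h4).1
      simp at h5
      have h6 : N - 1 - i = l.length := by omega
      rw [h6] at h4
      have h7 : i = N - (l.length + 1) := by omega
      simp at h4
      exact ⟨h4.symm, by rw [h3, h7, hc]⟩
  · rintro (⟨i, h1, h2, h3, h4⟩ | ⟨rfl, h⟩)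
    · refine ⟨i, h1, h2, h3, ?_⟩
      have h5 := (List.getElem?_eq_some_iff.1 h4).1
      rw [List.reverse_cons, List.getElem?_append_left h5, h4]
    · refine ⟨N - (l.length + 1), by omega, by omega, by rw [h, hc], ?_⟩
      have : N - 1 - (N - (l.length + 1)) = l.length := by omega
      rw [this]
      simp

end slot

section complete
variable {Q K Γ : Type} [Finite Q] [Finite K] [Finite Γ] {e : PN Q K Γ → ℕ} {M : Mach Q K Γ}

section act
variable {ω : TimedWord} {x : ℝ} {j : K} {N : ℕ} {l l' : List Γ}

theorem untTick_intro {u : ℝ} {φ : MTL} (ht : csat ω (tickF e) (x + 1)) (hu : u < x + 1)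
    (h : ∀ s, u < s → s < x + 1 → csat ω φ s) : csat ω (unt φ (tickF e)) u :=
  csat_unt.2 ⟨x + 1, hu, ht, h⟩

theorem actF_complete {b : Act Γ} (hlN : l.length < N) (hlN' : l'.length < N)
    (ht : csat ω (tickF e) (x + 1)) (hn : ∀ s, x < s → s < x + 1 → ¬ csat ω (tickF e) s)
    (h : ∀ s, x < s → s < x + 1 → ∀ a, Pres e ω j a s ↔ Slot N l a (s - x))
    (h' : ∀ s, x < s → s < x + 1 → ∀ a, Pres e ω j a (s + 1) ↔ Slot N l' a (s - x))
    (hb : b.rel l l') : csat ω (actF e j b) x := by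
  have hN : (0 : ℝ) < N := by exact_mod_cast (by omega : 0 < N)
  -- `x + y` is the position of the top of a stack `a :: t`
  have pos : ∀ t : List Γ, t.length + 1 < N → ∃ y : ℝ, 0 < y ∧ y < 1 ∧
      y * N = N - (t.length + 1) := by
    intro t ht
    have ht' : (t.length : ℝ) + 1 < N := by exact_mod_cast ht
    refine ⟨(N - (t.length + 1)) / N, div_pos (by linarith) hN, ?_, by field_simp⟩
    rw [div_lt_one hN]
    have : (0 : ℝ) ≤ t.length := Nat.cast_nonneg _
    linarith
  have below : ∀ (t : List Γ) (y z : ℝ) (b : Γ), y * N = N - (t.length + 1) → z ≤ y →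
      ¬ Slot N t b z := by
    intro t y z b hy hz hs
    have h1 := slot_ge hs
    have h2 : z * N ≤ y * N := mul_le_mul_of_nonneg_right hz hN.le
    linarith
  have keep : l' = l → csat ω (cpT e j) x := by
    intro hl
    refine untTick_intro ht (by linarith) fun s h1 h2 => csat_cpF.2 fun a => ?_
    rw [h s h1 h2, h' s h1 h2, hl]
  have ne_of_lt : ∀ (t : List Γ) (y z : ℝ), y * N = N - (t.length + 1) → z ≠ y →
      z * N ≠ N - (t.length + 1) := by
    intro t y z hy hz h
    exact hz (mul_right_cancel₀ hN.ne' (h.trans hy.symm))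
  cases b with
  | keep => exact keep hb
  | empty =>
    obtain ⟨rfl, rfl⟩ := hb
    refine untTick_intro ht (by linarith) fun s h1 h2 => ⟨csat_noF.2 fun a => ?_,
      csat_nx.2 (csat_noF.2 fun a => ?_)⟩
    · rw [h s h1 h2]; exact not_slot_nil
    · rw [h' s h1 h2]; exact not_slot_nil
  | top a =>
    obtain ⟨hl, t, rfl⟩ := hb
    obtain ⟨y, hy0, hy1, hy⟩ := pos t hlN
    refine ⟨keep hl, csat_unt.2 ⟨x + y, by linarith, ⟨?_, hn _ (by linarith) (by linarith)⟩, ?_⟩⟩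
    · refine (h _ (by linarith) (by linarith) a).2 ?_
      rw [slot_cons hlN]
      exact Or.inr ⟨rfl, by rw [← hy]; ring⟩
    · intro s h1 h2
      refine ⟨csat_noF.2 fun b => ?_, hn s h1 (by linarith)⟩
      rw [h s h1 (by linarith), slot_cons hlN]
      rintro (hs | ⟨-, hs⟩)
      · exact below t y _ b hy (by linarith) hs
      · exact ne_of_lt t y _ hy (by linarith) hs
  | pop a =>
    obtain rfl : l = a :: l' := hb
    obtain ⟨y, hy0, hy1, hy⟩ := pos l' hlN
    refine csat_unt.2 ⟨x + y, by linarith, ⟨hn _ (by linarith) (by linarith), ?_, ?_, ?_⟩, ?_⟩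
    · refine (h _ (by linarith) (by linarith) a).2 ?_
      rw [slot_cons hlN]
      exact Or.inr ⟨rfl, by rw [← hy]; ring⟩
    · refine csat_nx.2 (csat_noF.2 fun b => ?_)
      rw [h' _ (by linarith) (by linarith)]
      exact below l' y _ b hy (by linarith)
    · refine untTick_intro ht (by linarith) fun s h1 h2 => csat_cpF.2 fun b => ?_
      rw [h s (by linarith) h2, h' s (by linarith) h2, slot_cons hlN, or_iff_left]
      rintro ⟨-, hs⟩
      exact ne_of_lt l' y _ hy (by linarith) hs
    · intro s h1 h2
      refine ⟨hn s h1 (by linarith), csat_noF.2 fun b => ?_, csat_nx.2 (csat_noF.2 fun b => ?_)⟩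
      · rw [h s h1 (by linarith), slot_cons hlN]
        rintro (hs | ⟨-, hs⟩)
        · exact below l' y _ b hy (by linarith) hs
        · exact ne_of_lt l' y _ hy (by linarith) hs
      · rw [h' s h1 (by linarith)]
        exact below l' y _ b hy (by linarith)
  | push a =>
    obtain rfl : l' = a :: l := hb
    obtain ⟨y, hy0, hy1, hy⟩ := pos l hlN'
    refine csat_unt.2 ⟨x + y, by linarith, ⟨hn _ (by linarith) (by linarith), ?_, ?_, ?_⟩, ?_⟩
    · refine csat_noF.2 fun b => ?_
      rw [h _ (by linarith) (by linarith)]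
      exact below l y _ b hy (by linarith)
    · refine csat_nx.2 (csat_exF.2 fun b => ?_)
      rw [h' _ (by linarith) (by linarith), slot_cons hlN', or_iff_right
        (below l y _ b hy (by linarith)), and_iff_left]
      rw [← hy]; ring
    · refine untTick_intro ht (by linarith) fun s h1 h2 => csat_cpF.2 fun b => ?_
      rw [h s (by linarith) h2, h' s (by linarith) h2, slot_cons hlN', or_iff_left]
      rintro ⟨-, hs⟩
      exact ne_of_lt l y _ hy (by linarith) hs
    · intro s h1 h2
      refine ⟨hn s h1 (by linarith), csat_noF.2 fun b => ?_, csat_nx.2 (csat_noF.2 fun b => ?_)⟩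
      · rw [h s h1 (by linarith)]
        exact below l y _ b hy (by linarith)
      · rw [h' s h1 (by linarith), slot_cons hlN']
        rintro (hs | ⟨-, hs⟩)
        · exact below l y _ b hy (by linarith) hs
        · exact ne_of_lt l y _ hy (by linarith) hs

theorem wordF_complete {y : ℝ} (hlN : l.length < N)
    (ht : csat ω (tickF e) 1) (hn : ∀ s, 0 < s → s < 1 → ¬ csat ω (tickF e) s)
    (hy0 : 0 ≤ y) (hy1 : y < 1) (hy : y * N < N - l.length)
    (h : ∀ s, y < s → s < 1 → ∀ a, Pres e ω j a s ↔ Slot N l a s) :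
    csat ω (wordF e j l) y := by
  have hN : (0 : ℝ) < N := by exact_mod_cast (by omega : 0 < N)
  induction l generalizing y with
  | nil =>
    refine csat_unt.2 ⟨1, hy1, ht, fun s h1 h2 => csat_noF.2 fun a => ?_⟩
    rw [h s h1 h2]
    exact not_slot_nil
  | cons a l ih =>
    simp only [List.length_cons, Nat.cast_add, Nat.cast_one] at hy hlN
    obtain ⟨z, hz⟩ : ∃ z : ℝ, z * N = N - (l.length + 1) :=
      ⟨(N - (l.length + 1)) / N, by field_simp⟩
    have hl0 : (0 : ℝ) ≤ l.length := Nat.cast_nonneg _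
    have hyz : y < z := by
      refine lt_of_mul_lt_mul_right ?_ hN.le
      linarith
    have hz1 : z < 1 := by
      refine lt_of_mul_lt_mul_right ?_ hN.le
      linarith
    have below : ∀ s b, s ≤ z → ¬ Slot N l b s := by
      intro s b hs hsl
      have h1 := slot_ge hsl
      have h2 : s * N ≤ z * N := mul_le_mul_of_nonneg_right hs hN.le
      linarith
    have neq : ∀ s, s ≠ z → s * N ≠ N - (l.length + 1) := fun s hs h =>
      hs (mul_right_cancel₀ hN.ne' (h.trans hz.symm))
    refine csat_unt.2 ⟨z, hyz, ⟨⟨hn z (by linarith) hz1, csat_exF.2 fun b => ?_⟩, ?_⟩, ?_⟩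
    · rw [h z hyz hz1, slot_cons hlN, or_iff_right (below z b le_rfl), and_iff_left hz]
    · refine ih (by omega) (by linarith) hz1 (by linarith) fun s h1 h2 b => ?_
      rw [h s (by linarith) h2, slot_cons hlN, or_iff_left]
      rintro ⟨-, hs⟩
      exact neq s h1.ne' hs
    · intro s h1 h2
      refine ⟨hn s (by linarith) (by linarith), csat_noF.2 fun b => ?_⟩
      rw [h s h1 (by linarith), slot_cons hlN]
      rintro (hs | ⟨-, hs⟩)
      · exact below s b h2.le hs
      · exact neq s h2.ne hs

end act

/-- The propositions true at time `n / N` in the model built from the run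
`c 0, …, c m`. -/
def lab (c : ℕ → Q × (K → List Γ)) (m N n : ℕ) : PN Q K Γ → Prop
  | .inl i => i = 0 ∨ (i = 1 ∧ N ∣ n) ∨ (i = 2 ∧ n = m * N)
  | .inr (.inl (j, a)) =>
      n / N ≤ m ∧ n % N ≠ 0 ∧ ((c (n / N)).2 j).reverse[N - 1 - n % N]? = some a
  | .inr (.inr q) => ∃ k ≤ m, n = k * N ∧ q = (c k).1

/-- The timed word with a position at every multiple of `1 / N`, labelled by `lab`. -/
noncomputable def modelW (e : PN Q K Γ → ℕ) (c : ℕ → Q × (K → List Γ)) (m N : ℕ) (hN : 0 < N) :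
    TimedWord where
  σ n := {p | ∃ r, lab c m N n r ∧ p = e r}
  t n := n / N
  σ_nonempty n := ⟨e (.inl 0), .inl 0, Or.inl rfl, rfl⟩
  t_zero := by simp
  t_mono := by
    intro a b hab
    have hN' : (0 : ℝ) < N := by exact_mod_cast hN
    have : (a : ℝ) < b := by exact_mod_cast hab
    exact div_lt_div_of_pos_right this hN'
  t_div x := by
    have hN' : (0 : ℝ) < N := by exact_mod_cast hN
    obtain ⟨k, hk⟩ := exists_nat_gt (x * N)
    exact ⟨k, by rwa [lt_div_iff₀ hN']⟩

section model
variable {c : ℕ → Q × (K → List Γ)} {m N : ℕ} {hN : 0 < N}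

theorem modelW_prop (he : Function.Injective e) {r : PN Q K Γ} {x : ℝ} :
    csat (modelW e c m N hN) (.prop (e r)) x ↔ ∃ n : ℕ, (n : ℝ) = x * N ∧ lab c m N n r := by
  have hN' : (N : ℝ) ≠ 0 := by exact_mod_cast hN.ne'
  simp only [csat, modelW, Set.mem_ofPred_eq]
  refine exists_congr fun n => and_congr (by rw [div_eq_iff hN']) ?_
  constructor
  · rintro ⟨r', h, h'⟩
    rwa [he h']
  · exact fun h => ⟨r, h, rfl⟩

theorem modelW_tick (he : Function.Injective e) {x : ℝ} :
    csat (modelW e c m N hN) (tickF e) x ↔ ∃ k : ℕ, x = k := by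
  have hN' : (N : ℝ) ≠ 0 := by exact_mod_cast hN.ne'
  rw [tickF, modelW_prop he]
  constructor
  · rintro ⟨n, h1, h2⟩
    have h2 : N ∣ n := by simpa [lab] using h2
    obtain ⟨k, rfl⟩ := h2
    refine ⟨k, mul_right_cancel₀ hN' ?_⟩
    rw [← h1]; push_cast; ring
  · rintro ⟨k, rfl⟩
    exact ⟨k * N, by push_cast; ring, Or.inr (Or.inl ⟨rfl, Dvd.intro_left k rfl⟩)⟩

theorem modelW_noTick (he : Function.Injective e) {k : ℕ} {s : ℝ} (h1 : (k : ℝ) < s)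
    (h2 : s < k + 1) : ¬ csat (modelW e c m N hN) (tickF e) s := by
  rw [modelW_tick he]
  rintro ⟨i, rfl⟩
  have h3 : k < i := by exact_mod_cast h1
  have h4 : i < k + 1 := by exact_mod_cast h2
  omega

theorem modelW_fin (he : Function.Injective e) {x : ℝ} :
    csat (modelW e c m N hN) (finF e) x ↔ x = m := by
  have hN' : (N : ℝ) ≠ 0 := by exact_mod_cast hN.ne'
  rw [finF, modelW_prop he]
  constructor
  · rintro ⟨n, h1, h2⟩
    have h2 : n = m * N := by simpa [lab] using h2
    refine mul_right_cancel₀ hN' ?_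
    rw [← h1, h2]; push_cast; ring
  · rintro rfl
    exact ⟨m * N, by push_cast; ring, Or.inr (Or.inr ⟨rfl, rfl⟩)⟩

theorem modelW_state (he : Function.Injective e) {x : ℝ} {q : Q} :
    csat (modelW e c m N hN) (staF e q) x ↔ ∃ k ≤ m, x = k ∧ q = (c k).1 := by
  have hN' : (N : ℝ) ≠ 0 := by exact_mod_cast hN.ne'
  rw [staF, modelW_prop he]
  constructor
  · rintro ⟨n, h1, k, h2, rfl, h3⟩
    refine ⟨k, h2, mul_right_cancel₀ hN' ?_, h3⟩
    rw [← h1]; push_cast; ring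
  · rintro ⟨k, h2, rfl, h3⟩
    exact ⟨k * N, by push_cast; ring, k, h2, rfl, h3⟩

theorem modelW_pres (he : Function.Injective e) {k : ℕ} (hk : k ≤ m) {j : K} {a : Γ} {s : ℝ}
    (h1 : (k : ℝ) < s) (h2 : s < k + 1) :
    Pres e (modelW e c m N hN) j a s ↔ Slot N ((c k).2 j) a (s - k) := by
  have hN' : (0 : ℝ) < N := by exact_mod_cast hN
  rw [Pres, letF, modelW_prop he]
  constructor
  · rintro ⟨n, h3, h4, h5, h6⟩
    have h7 : k * N < n := by
      have : (k : ℝ) * N < n := by rw [h3]; exact mul_lt_mul_of_pos_right h1 hN'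
      exact_mod_cast this
    have h8 : n < (k + 1) * N := by
      have : (n : ℝ) < (k + 1) * N := by rw [h3]; exact mul_lt_mul_of_pos_right h2 hN'
      exact_mod_cast this
    have h9 : n / N = k := Nat.div_eq_of_lt_le h7.le h8
    rw [h9] at h6
    refine ⟨n % N, Nat.pos_of_ne_zero h5, Nat.mod_lt _ hN, ?_, h6⟩
    have h10 : (k : ℝ) * N + ((n % N : ℕ) : ℝ) = n := by
      have := Nat.div_add_mod n N
      rw [h9, mul_comm] at this
      exact_mod_cast this
    rw [sub_mul, ← h3]; linarith
  · rintro ⟨i, h3, h4, h5, h6⟩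
    have h7 : (k * N + i) / N = k := by
      rw [mul_comm, Nat.mul_add_div hN, Nat.div_eq_of_lt h4, add_zero]
    have h8 : (k * N + i) % N = i := by
      rw [mul_comm, Nat.mul_add_mod, Nat.mod_eq_of_lt h4]
    refine ⟨k * N + i, ?_, ?_⟩
    · push_cast
      rw [← h5]; ring
    · refine ⟨by rwa [h7], by rw [h8]; omega, ?_⟩
      rw [h7, h8]; exact h6

end model

theorem exists_run {c c' : Q × (K → List Γ)} (h : ReflTransGen M.Stp c c') :
    ∃ (m : ℕ) (r : ℕ → Q × (K → List Γ)), r 0 = c ∧ r m = c' ∧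
      ∀ k < m, M.Stp (r k) (r (k + 1)) := by
  induction h with
  | refl => exact ⟨0, fun _ => c, rfl, rfl, fun k hk => absurd hk (Nat.not_lt_zero k)⟩
  | @tail b d _ hs ih =>
    obtain ⟨m, r, h0, hm, hr⟩ := ih
    refine ⟨m + 1, fun i => if i ≤ m then r i else d, by simpa using h0, by simp, ?_⟩
    intro k hk
    rcases Nat.lt_succ_iff_lt_or_eq.1 hk with h | rfl
    · have h1 : k ≤ m := h.le
      have h2 : k + 1 ≤ m := h
      simpa only [if_pos h1, if_pos h2] using hr k h
    · have h2 : ¬ k + 1 ≤ k := by omega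
      simpa [h2, hm] using hs

open Classical in
/-- The grid `1 / N` is chosen fine enough to hold all stacks of the run and to have at least `β`
points per unit of time. -/
theorem runF_complete (he : Function.Injective e) {q0 : Q} {j0 : K} {l : List Γ}
    (h : M.Acc (q0, Function.update (fun _ => []) j0 l)) (β : ℕ) :
    ∃ ω : TimedWord, csat ω (runF e M q0 j0 l) 0 ∧ ¬ BddVar ω β 1 := by
  obtain ⟨c', hc', hf⟩ := h
  obtain ⟨m, c, h0, rfl, hstep⟩ := exists_run hc'
  obtain ⟨B, hB⟩ := Finite.exists_le fun p : Fin (m + 1) × K => ((c p.1).2 p.2).length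
  obtain ⟨N, hN, hBN, hβN⟩ : ∃ N, 0 < N ∧ B < N ∧ β ≤ N := ⟨B + β + 1, by omega, by omega, by omega⟩
  have hlen : ∀ k ≤ m, ∀ j, ((c k).2 j).length < N := fun k hk j =>
    lt_of_le_of_lt (hB (⟨k, by omega⟩, j)) hBN
  have hN' : (0 : ℝ) < N := by exact_mod_cast hN
  let ω := modelW e c m N hN
  have tick : ∀ k : ℕ, csat ω (tickF e) k := fun k => (modelW_tick he).2 ⟨k, rfl⟩
  have tick1 : ∀ k : ℕ, csat ω (tickF e) ((k : ℝ) + 1) := fun k =>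
    (modelW_tick he).2 ⟨k + 1, by push_cast; rfl⟩
  have word : ∀ j, csat ω (wordF e j ((c 0).2 j)) 0 := by
    intro j
    have hl := hlen 0 (Nat.zero_le m) j
    have hl' : (((c 0).2 j).length : ℝ) < N := by exact_mod_cast hl
    refine wordF_complete hl (by simpa using tick 1) (fun s h1 h2 => ?_) le_rfl one_pos
      (by linarith) fun s h1 h2 a => ?_
    · exact modelW_noTick (k := 0) he (by simpa using h1) (by simpa using h2)
    · simpa using modelW_pres (k := 0) (hN := hN) (c := c) (a := a) (j := j) he (Nat.zero_le m)
        (s := s) (by simpa using h1) (by simpa using h2)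
  rw [h0] at word
  refine ⟨ω, ⟨by simpa using word j0, ⟨?_, ?_⟩, ?_, ?_, ?_, ?_⟩, ?_⟩
  · simpa using tick 0
  · refine csat_glob.2 fun y _ => csat_imp.2 fun hy => ?_
    obtain ⟨k, rfl⟩ := (modelW_tick he).1 hy
    exact csat_untOne.2 ⟨tick1 k, fun s h1 h2 => modelW_noTick he h1 h2⟩
  · refine csat_glob.2 fun y _ => csat_bigAnd.2 fun q => csat_imp.2 fun hq => ?_
    obtain ⟨k, hk, rfl, rfl⟩ := (modelW_state he).1 hq
    by_cases hfk : M.final (c k).1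
    · rw [if_pos hfk]; trivial
    rw [if_neg hfk]
    have hkm : k < m := lt_of_le_of_ne hk fun h => hfk (h ▸ hf)
    obtain ⟨k', b, htr, hrel⟩ := hstep k hkm
    refine ⟨fun h => hkm.ne ?_, csat_bigOr.2 ⟨⟨(k', b, (c (k + 1)).1), htr⟩, ?_, ?_⟩⟩
    · exact_mod_cast (modelW_fin he).1 h
    · refine csat_bigAnd.2 fun j => actF_complete (hlen k hk j) (hlen (k + 1) hkm j) (tick1 k)
        (fun s h1 h2 => modelW_noTick he h1 h2) (fun s h1 h2 a => modelW_pres he hk h1 h2)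
        (fun s h1 h2 a => ?_) (hrel j)
      rw [modelW_pres (k := k + 1) he hkm (by push_cast; linarith) (by push_cast; linarith)]
      push_cast
      rw [add_sub_add_right_eq_sub]
    · exact csat_nx.2 ((modelW_state he).2 ⟨k + 1, hkm, by push_cast; rfl, rfl⟩)
  · exact csat_ev.2 ⟨m, Nat.cast_nonneg m, tick m, (modelW_fin he).2 rfl⟩
  · exact (modelW_state he).2 ⟨0, Nat.zero_le m, by simp, by rw [h0]⟩
  · exact csat_bigAnd.2 fun j => by simpa [j.2] using word j.1
  · intro hb
    have h1 := hb 0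
    have h2 : ω.t (0 + β) - ω.t 0 = (β : ℝ) / N := by simp [ω, modelW]
    rw [h2, lt_div_iff₀ hN', one_mul] at h1
    exact absurd hβN (by exact_mod_cast not_le.2 h1)

end complete

/-! ### Multi-stack Turing machines as stack machines -/

section tm2
open Turing StateTransition

variable {K Γ Λ σ : Type} [DecidableEq K]

/-- One elementary operation of a statement of a multi-stack program: the control state consists
of the statement still to be executed and the value of the internal variable. A `goto` continues
with the body of the label jumped to. Operations without effect on the stacks perform `keep` on
an arbitrary stack. -/
def micro (tr : Λ → TM2.Stmt (fun _ : K => Γ) Λ σ) (p : TM2.Stmt (fun _ : K => Γ) Λ σ × σ)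
    (k : K) (b : Act Γ) (p' : TM2.Stmt (fun _ : K => Γ) Λ σ × σ) : Prop :=
  match p.1 with
  | .push k0 f q => k = k0 ∧ b = .push (f p.2) ∧ p' = (q, p.2)
  | .peek k0 f q => k = k0 ∧ ((∃ a, b = .top a ∧ p' = (q, f p.2 (some a))) ∨
      (b = .empty ∧ p' = (q, f p.2 none)))
  | .pop k0 f q => k = k0 ∧ ((∃ a, b = .pop a ∧ p' = (q, f p.2 (some a))) ∨
      (b = .empty ∧ p' = (q, f p.2 none)))
  | .load f q => b = .keep ∧ p' = (q, f p.2)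
  | .branch f q₁ q₂ => b = .keep ∧ p' = (cond (f p.2) q₁ q₂, p.2)
  | .goto f => b = .keep ∧ p' = (tr (f p.2), p.2)
  | .halt => False

/-- The stack machine of a multi-stack program, restricted to the statements that occur in the
bodies of the labels in `S`. It accepts on reaching the statement `halt`. -/
noncomputable def tmM (tr : Λ → TM2.Stmt (fun _ : K => Γ) Λ σ) (S : Finset Λ) :
    Mach {p : TM2.Stmt (fun _ : K => Γ) Λ σ × σ // some p.1 ∈ TM2.stmts tr S} K Γ where
  trans p k b p' := micro tr p.1 k b p'.1
  final p := p.1.1 = .halt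

variable {tr : Λ → TM2.Stmt (fun _ : K => Γ) Λ σ} {S : Finset Λ}

theorem actAt_self {k : K} {b : Act Γ} : actAt k b k = b := by simp [actAt]

theorem actAt_ne {k j : K} {b : Act Γ} (h : j ≠ k) : actAt k b j = .keep := by simp [actAt, h]

/-- Executing `b` on stack `k` replaces the content of that stack and keeps all the others. -/
theorem actAt_rel {k : K} {b : Act Γ} {s s' : K → List Γ} :
    (∀ j, (actAt k b j).rel (s j) (s' j)) ↔ ∃ l, b.rel (s k) l ∧ s' = Function.update s k l := by
  constructor
  · intro h
    refine ⟨s' k, by simpa [actAt_self] using h k, funext fun j => ?_⟩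
    by_cases hj : j = k
    · subst hj; simp
    · simpa [hj, actAt_ne hj, Act.rel] using h j
  · rintro ⟨l, hl, rfl⟩ j
    by_cases hj : j = k
    · subst hj; simpa [actAt_self] using hl
    · simp [hj, actAt_ne hj, Act.rel]

theorem keep_rel {k : K} {s s' : K → List Γ} :
    (∀ j, (actAt k Act.keep j).rel (s j) (s' j)) ↔ s' = s := by
  rw [actAt_rel]
  simp [Act.rel]

/-- Termination of the remaining computation is inherited backwards along elementary
operations. -/
theorem tmM_stp_dom {c c' : {p : TM2.Stmt (fun _ : K => Γ) Λ σ × σ // some p.1 ∈ TM2.stmts tr S} ×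
      (K → List Γ)} (h : (tmM tr S).Stp c c')
    (hd : (eval (TM2.step tr) (TM2.stepAux c'.1.1.1 c'.1.1.2 c'.2)).Dom) :
    (eval (TM2.step tr) (TM2.stepAux c.1.1.1 c.1.1.2 c.2)).Dom := by
  obtain ⟨⟨⟨q, v⟩, hq⟩, s⟩ := c
  obtain ⟨⟨⟨q', v'⟩, hq'⟩, s'⟩ := c'
  obtain ⟨k, b, ht, hr⟩ := h
  simp only at hd hr ⊢
  simp only [tmM, micro] at ht
  cases q with
  | push k0 f q =>
    obtain ⟨rfl, rfl, h⟩ := ht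
    cases h
    obtain ⟨l, hl, rfl⟩ := actAt_rel.1 hr
    simp only [Act.rel] at hl
    subst hl
    exact hd
  | peek k0 f q =>
    obtain ⟨rfl, ⟨a, rfl, h⟩ | ⟨rfl, h⟩⟩ := ht <;> cases h <;>
      obtain ⟨l, hl, rfl⟩ := actAt_rel.1 hr <;> simp only [Act.rel] at hl
    · obtain ⟨rfl, t, ht⟩ := hl
      simp only [Function.update_eq_self] at hd
      simpa [ht] using hd
    · obtain ⟨h1, rfl⟩ := hl
      rw [← h1, Function.update_eq_self] at hd
      simpa [h1] using hd
  | pop k0 f q =>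
    obtain ⟨rfl, ⟨a, rfl, h⟩ | ⟨rfl, h⟩⟩ := ht <;> cases h <;>
      obtain ⟨l, hl, rfl⟩ := actAt_rel.1 hr <;> simp only [Act.rel] at hl
    · simpa [hl] using hd
    · obtain ⟨h1, rfl⟩ := hl
      simpa [h1] using hd
  | load f q =>
    obtain ⟨rfl, h⟩ := ht
    cases h
    cases keep_rel.1 hr
    exact hd
  | branch f q₁ q₂ =>
    obtain ⟨rfl, h⟩ := ht
    cases h
    cases keep_rel.1 hr
    simp only [TM2.stepAux]
    cases hf : f v <;> simpa [hf] using hd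
  | goto f =>
    obtain ⟨rfl, h⟩ := ht
    cases h
    cases keep_rel.1 hr
    simp only [TM2.stepAux]
    rw [reaches_eval (b := TM2.stepAux (tr (f v)) v s)]
    · exact hd
    · exact Relation.ReflTransGen.single (by simp)
  | halt => exact ht.elim

theorem tmM_acc_dom {c : {p : TM2.Stmt (fun _ : K => Γ) Λ σ × σ // some p.1 ∈ TM2.stmts tr S} ×
      (K → List Γ)} (h : (tmM tr S).Acc c) :
    (eval (TM2.step tr) (TM2.stepAux c.1.1.1 c.1.1.2 c.2)).Dom := by
  obtain ⟨c', hr, hf⟩ := h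
  induction hr using Relation.ReflTransGen.head_induction_on with
  | refl =>
    have hf : c'.1.1.1 = .halt := hf
    rw [hf]
    simp only [TM2.stepAux]
    exact Part.dom_iff_mem.2 ⟨_, mem_eval.2 ⟨.refl, rfl⟩⟩
  | head h _ ih => exact tmM_stp_dom h ih

theorem Mach.Acc.head {Q : Type} {M : Mach Q K Γ} {c c' : Q × (K → List Γ)} (h : M.Stp c c')
    (ha : M.Acc c') : M.Acc c := by
  obtain ⟨d, hr, hf⟩ := ha
  exact ⟨d, .head h hr, hf⟩

/-- The stack machine accepts when started in the body of the label of the configuration; this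
is void for halted configurations. -/
def AccCfg (tr : Λ → TM2.Stmt (fun _ : K => Γ) Λ σ) (S : Finset Λ)
    (c : TM2.Cfg (fun _ : K => Γ) Λ σ) : Prop :=
  ∀ l, c.l = some l → ∀ h : some (tr l) ∈ TM2.stmts tr S, (tmM tr S).Acc (⟨(tr l, c.var), h⟩, c.stk)

theorem mem_stmts {l : Λ} (h : l ∈ S) : some (tr l) ∈ TM2.stmts tr S := by
  simp only [TM2.stmts, Finset.some_mem_insertNone, Finset.mem_biUnion]
  exact ⟨l, h, TM2.stmts₁_self⟩

theorem accCfg_stmt [Inhabited K] (hS : ∀ l ∈ S, TM2.SupportsStmt S (tr l))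
    (q : TM2.Stmt (fun _ : K => Γ) Λ σ) (v : σ) (s : K → List Γ)
    (hq : some q ∈ TM2.stmts tr S) (h : AccCfg tr S (TM2.stepAux q v s)) :
    (tmM tr S).Acc (⟨(q, v), hq⟩, s) := by
  induction q generalizing v s with
  | push k0 f q ih =>
    have hm : some q ∈ TM2.stmts tr S :=
      TM2.stmts_trans (by simp [TM2.stmts₁, TM2.stmts₁_self]) hq
    refine Mach.Acc.head ?_ (ih _ _ hm h)
    exact ⟨k0, _, ⟨rfl, rfl, rfl⟩, actAt_rel.2 ⟨_, rfl, rfl⟩⟩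
  | peek k0 f q ih =>
    have hm : some q ∈ TM2.stmts tr S :=
      TM2.stmts_trans (by simp [TM2.stmts₁, TM2.stmts₁_self]) hq
    refine Mach.Acc.head ?_ (ih _ _ hm h)
    cases hk : s k0 with
    | nil => exact ⟨k0, _, ⟨rfl, .inr ⟨rfl, rfl⟩⟩, actAt_rel.2 ⟨[], ⟨hk, rfl⟩, by simp [← hk]⟩⟩
    | cons a t => exact ⟨k0, _, ⟨rfl, .inl ⟨a, rfl, rfl⟩⟩, actAt_rel.2 ⟨s k0, ⟨rfl, t, hk⟩, by simp⟩⟩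
  | pop k0 f q ih =>
    have hm : some q ∈ TM2.stmts tr S :=
      TM2.stmts_trans (by simp [TM2.stmts₁, TM2.stmts₁_self]) hq
    refine Mach.Acc.head ?_ (ih _ _ hm h)
    cases hk : s k0 with
    | nil => exact ⟨k0, _, ⟨rfl, .inr ⟨rfl, rfl⟩⟩, actAt_rel.2 ⟨[], ⟨hk, rfl⟩, by simp⟩⟩
    | cons a t => exact ⟨k0, _, ⟨rfl, .inl ⟨a, rfl, rfl⟩⟩, actAt_rel.2 ⟨t, hk, by simp⟩⟩
  | load f q ih =>
    have hm : some q ∈ TM2.stmts tr S :=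
      TM2.stmts_trans (by simp [TM2.stmts₁, TM2.stmts₁_self]) hq
    refine Mach.Acc.head ?_ (ih _ _ hm h)
    exact ⟨default, _, ⟨rfl, rfl⟩, keep_rel.2 rfl⟩
  | branch f q₁ q₂ ih₁ ih₂ =>
    have hm : some (cond (f v) q₁ q₂) ∈ TM2.stmts tr S :=
      TM2.stmts_trans (by cases f v <;> simp [TM2.stmts₁, TM2.stmts₁_self]) hq
    have ha : (tmM tr S).Acc (⟨(cond (f v) q₁ q₂, v), hm⟩, s) := by
      simp only [TM2.stepAux] at h
      revert hm h
      cases f v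
      · exact fun h hm => ih₂ _ _ hm h
      · exact fun h hm => ih₁ _ _ hm h
    refine Mach.Acc.head ?_ ha
    exact ⟨default, _, ⟨rfl, rfl⟩, keep_rel.2 rfl⟩
  | goto f =>
    have hsup : TM2.SupportsStmt S (.goto f : TM2.Stmt (fun _ : K => Γ) Λ σ) := by
      simp only [TM2.stmts, Finset.some_mem_insertNone, Finset.mem_biUnion] at hq
      obtain ⟨l, hl, hq⟩ := hq
      exact TM2.stmts₁_supportsStmt_mono hq (hS l hl)
    have hm := mem_stmts (tr := tr) (hsup v)
    refine Mach.Acc.head ?_ (h _ rfl hm)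
    exact ⟨default, _, ⟨rfl, rfl⟩, keep_rel.2 rfl⟩
  | halt => exact ⟨_, .refl, rfl⟩

/-- A supported program halts exactly if its stack machine accepts. -/
theorem tmM_acc_iff [Inhabited K] (hS : ∀ l ∈ S, TM2.SupportsStmt S (tr l)) {l : Λ} (hl : l ∈ S)
    {v : σ} {s : K → List Γ} :
    (tmM tr S).Acc (⟨(tr l, v), mem_stmts hl⟩, s) ↔ (eval (TM2.step tr) ⟨some l, v, s⟩).Dom := by
  have hstep : Reaches (TM2.step tr) ⟨some l, v, s⟩ (TM2.stepAux (tr l) v s) :=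
    Relation.ReflTransGen.single (by simp)
  constructor
  · intro h
    rw [reaches_eval hstep]
    exact tmM_acc_dom h
  · intro h
    obtain ⟨d, hd⟩ := Part.dom_iff_mem.1 h
    obtain ⟨hr, hn⟩ := mem_eval.1 hd
    suffices hc : AccCfg tr S ⟨some l, v, s⟩ from hc l rfl _
    generalize (⟨some l, v, s⟩ : TM2.Cfg (fun _ : K => Γ) Λ σ) = a at hr
    induction hr using Relation.ReflTransGen.head_induction_on with
    | refl =>
      intro l' hl' _
      obtain ⟨_ | l0, v0, s0⟩ := d
      · cases hl'
      · cases hn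
    | @head a c hac _ ih =>
      intro l' hl' h'
      obtain ⟨_ | l0, v0, s0⟩ := a
      · cases hl'
      · cases hl'
        simp only [TM2.step, Option.mem_def, Option.some.injEq] at hac
        subst hac
        exact accCfg_stmt hS _ _ _ h' ih

end tm2

/-! ### Effectiveness -/

section effective
open Turing

theorem itv_code_injective {J J' : Itv} (h : J.code = J'.code) : J = J' := by
  obtain ⟨a, b, c, d⟩ := J
  obtain ⟨a', b', c', d'⟩ := J'
  simp only [Itv.code, Nat.pair_eq_pair] at h
  obtain ⟨rfl, h2, h3, h4⟩ := h
  cases b <;> cases b' <;> simp at h2 <;> cases d <;> cases d' <;> simp at h4 <;>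
    cases c <;> cases c' <;> simp_all

theorem code_injective {φ ψ : MTL} (h : φ.code = ψ.code) : φ = ψ := by
  induction φ generalizing ψ with
  | tt => cases ψ <;> simp_all [MTL.code, Nat.pair_eq_pair]
  | prop p => cases ψ <;> simp_all [MTL.code, Nat.pair_eq_pair]
  | neg φ ih =>
    cases ψ <;> simp [MTL.code, Nat.pair_eq_pair] at h
    rw [ih h]
  | conj φ φ' ih ih' =>
    cases ψ <;> simp [MTL.code, Nat.pair_eq_pair] at h
    rw [ih h.1, ih' h.2]
  | until_ J φ φ' ih ih' =>
    cases ψ <;> simp [MTL.code, Nat.pair_eq_pair] at h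
    rw [ih h.2.1, ih' h.2.2, itv_code_injective h.1]

/-- Functions defined by recursion on binary digits are primitive recursive. -/
theorem primrec_binary {W : ℕ → ℕ} {h : ℕ → ℕ → ℕ} (hh : Primrec₂ h)
    (hW : ∀ n, 0 < n → W n = h n (W (n / 2))) : Primrec W := by
  have hg : Primrec₂ (fun (_ : Unit) (l : List ℕ) =>
      if l.length = 0 then some (W 0)
      else (l[l.length / 2]?).map (fun w => h l.length w)) := by
    refine Primrec.ite (Primrec.eq.comp (Primrec.list_length.comp Primrec.snd) (Primrec.const 0))
      (Primrec.const _) ?_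
    refine Primrec.option_map ?_ ?_
    · exact Primrec.list_getElem?.comp Primrec.snd
        (Primrec.nat_div.comp (Primrec.list_length.comp Primrec.snd) (Primrec.const 2))
    · exact hh.comp (Primrec.list_length.comp (Primrec.snd.comp Primrec.fst)) Primrec.snd
  have := Primrec.nat_strong_rec (fun (_ : Unit) => W) hg (fun _ n => by
    rcases Nat.eq_zero_or_pos n with rfl | hn
    · simp
    · have h2 : n / 2 < n := Nat.div_lt_self hn (by norm_num)
      simp [hn.ne', h2, hW n hn])
  exact this.comp (Primrec.const ()) Primrec.id

open PartrecToTM2 in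
theorem trNat_pos {n : ℕ} (hn : 0 < n) :
    trNat n = (if n % 2 = 1 then Γ'.bit1 else Γ'.bit0) :: trNat (n / 2) := by
  obtain ⟨m, rfl | rfl⟩ : ∃ m, n = m + m ∨ n = m + m + 1 := ⟨n / 2, by omega⟩
  · have h1 : (m + m) / 2 = m := by omega
    have h2 : ¬ (m + m) % 2 = 1 := by omega
    rw [h1, if_neg h2, trNat, trNat, Nat.cast_add, Num.bit0_of_bit0]
    have hm : (m : Num) ≠ 0 := by
      intro h
      have : m = 0 := by exact_mod_cast h
      omega
    cases h : (m : Num) with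
    | zero => exact absurd h hm
    | pos p => rfl
  · have h1 : (m + m + 1) / 2 = m := by omega
    have h2 : (m + m + 1) % 2 = 1 := by omega
    rw [h1, if_pos h2, trNat, trNat, Nat.cast_add, Nat.cast_add, Nat.cast_one, Num.bit1_of_bit1]
    cases h : (m : Num) with
    | zero => rfl
    | pos p => rfl

open PartrecToTM2 in
/-- With the machine fixed, the formula for the run on input `n` is computable from `n`. -/
theorem runF_computable {Q K : Type} [Finite Q] [Finite K] (e : PN Q K Γ' → ℕ) (M : Mach Q K Γ')
    (q0 : Q) (j0 : K) : Computable fun n => (runF e M q0 j0 (trNat n ++ [Γ'.cons])).code := by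
  let A := (MTL.conj (.neg (tickF e)) (noF e j0)).code
  let B := fun a => (MTL.conj (.neg (tickF e)) (exF e j0 a)).code
  have hW : Primrec fun n => (wordF e j0 (trNat n ++ [Γ'.cons])).code := by
    refine primrec_binary (h := fun n w => Nat.pair 4 (Nat.pair anyI.code (Nat.pair A (Nat.pair 3
      (Nat.pair (if n % 2 = 1 then B Γ'.bit1 else B Γ'.bit0) w))))) ?_ ?_
    · refine Primrec₂.natPair.comp (Primrec.const _) (Primrec₂.natPair.comp (Primrec.const _)
        (Primrec₂.natPair.comp (Primrec.const _) (Primrec₂.natPair.comp (Primrec.const _)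
        (Primrec₂.natPair.comp ?_ Primrec.snd))))
      exact Primrec.ite (Primrec.eq.comp (Primrec.nat_mod.comp Primrec.fst (Primrec.const 2))
        (Primrec.const 1)) (Primrec.const _) (Primrec.const _)
    · intro n hn
      rw [trNat_pos hn, List.cons_append]
      simp only [wordF, unt, MTL.code, A, B]
      split_ifs <;> rfl
  have : Primrec fun n => (runF e M q0 j0 (trNat n ++ [Γ'.cons])).code :=
    Primrec₂.natPair.comp (Primrec.const 3) (Primrec₂.natPair.comp hW (Primrec.const _))
  exact this.to_comp

open PartrecToTM2 in
instance : Finite K' := by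
  refine Finite.of_injective (β := Fin 4) (fun k => match k with
    | .main => 0 | .rev => 1 | .aux => 2 | .stack => 3) ?_
  rintro (_ | _) (_ | _) h <;> simp_all

open PartrecToTM2 in
/-- For a partial recursive `g` there are formulas, computable from `n`, that are satisfiable
exactly if `g n` is defined; a satisfiable formula of this family has, for every `β`, a model whose
variability is not bounded by `β/1`. -/
theorem exists_formula {g : ℕ →. ℕ} (hg : Nat.Partrec g) : ∃ Φ : ℕ → MTL,
    Computable (fun n => (Φ n).code) ∧ (∀ n ω, Models ω (Φ n) → (g n).Dom) ∧
    ∀ n, (g n).Dom → ∀ β : ℕ, ∃ ω, Models ω (Φ n) ∧ ¬ BddVar ω β 1 := by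
  obtain ⟨c, hc⟩ := ToPartrec.Code.exists_code (Nat.Partrec'.part_iff₁.2 (Partrec.nat_iff.2 hg))
  let S := codeSupp c Cont'.halt
  let l := trNormal c Cont'.halt
  have hS : ∀ l ∈ S, TM2.SupportsStmt S (tr l) := (tr_supports c Cont'.halt).2
  have hl : l ∈ S := (tr_supports c Cont'.halt).1
  let Q := {p : TM2.Stmt (fun _ : K' => Γ') Λ' (Option Γ') × Option Γ' // some p.1 ∈ TM2.stmts tr S}
  have hQ : Finite Q := by
    refine Finite.of_injective (β := {o // o ∈ TM2.stmts tr S} × Option Γ')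
      (fun p => (⟨some p.1.1, p.2⟩, p.1.2)) ?_
    rintro ⟨⟨q, v⟩, h⟩ ⟨⟨q', v'⟩, h'⟩ h
    simp at h
    obtain ⟨rfl, rfl⟩ := h
    rfl
  have : Countable (PN Q K' Γ') := inferInstance
  obtain ⟨e, he⟩ := exists_injective_nat (PN Q K' Γ')
  let q0 : Q := ⟨(tr l, none), mem_stmts hl⟩
  have key : ∀ n, (tmM tr S).Acc (q0, Function.update (fun _ => []) K'.main
      (trNat n ++ [Γ'.cons])) ↔ (g n).Dom := by
    intro n
    rw [tmM_acc_iff hS hl]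
    have h1 : (⟨some l, none, Function.update (fun _ => []) K'.main (trNat n ++ [Γ'.cons])⟩ :
        TM2.Cfg (fun _ : K' => Γ') Λ' (Option Γ')) = init c [n] := by
      unfold init
      congr 1
      funext k
      cases k <;> simp [K'.elim, trList]
    rw [h1, tr_eval]
    have h2 := hc (n ::ᵥ .nil)
    simp only [List.Vector.head_cons] at h2
    have h3 : c.eval [n] = pure <$> g n := h2
    rw [h3]
    rfl
  refine ⟨fun n => runF e (tmM tr S) q0 K'.main (trNat n ++ [Γ'.cons]),
    runF_computable e _ q0 _, fun n ω h => ?_, fun n h β => ?_⟩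
  · rw [← key]
    convert runF_sound h
  · refine runF_complete he ?_ β
    convert (key n).2 h

/-! ### Enumerating the computations of a counter machine -/

theorem listCode_eq (l : List ℕ) : listCode l = Encodable.encode l := by
  induction l with
  | nil => rfl
  | cons a l ih => rw [listCode, ih, Encodable.encode_list_cons]; rfl

/-- Execution of the instruction with code `i` in location `s.1` with counter values `s.2`, where
only the counters `0` and `1` are distinguished. The choice in a branching instruction is made
according to whether `b` is `0`. -/
def execI (i : ℕ) (s : ℕ × ℕ × ℕ) (b : ℕ) : Option (ℕ × ℕ × ℕ) :=
  if i.unpair.1 = 1 then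
    if i.unpair.2 = 0 then some (s.1 + 1, s.2.1 + 1, s.2.2) else some (s.1 + 1, s.2.1, s.2.2 + 1)
  else if i.unpair.1 = 2 then
    if i.unpair.2 = 0 then
      if s.2.1 = 0 then none else some (s.1 + 1, s.2.1 - 1, s.2.2)
    else
      if s.2.2 = 0 then none else some (s.1 + 1, s.2.1, s.2.2 - 1)
  else if i.unpair.1 = 3 then
    if (if i.unpair.2.unpair.1 = 0 then s.2.1 else s.2.2) = 0 then some (s.1 + 1, s.2.1, s.2.2)
    else if b = 0 then some (i.unpair.2.unpair.2.unpair.1, s.2.1, s.2.2)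
    else some (i.unpair.2.unpair.2.unpair.2, s.2.1, s.2.2)
  else none

theorem execI_primrec : Primrec fun p : ℕ × (ℕ × ℕ × ℕ) × ℕ => execI p.1 p.2.1 p.2.2 := by
  have i : Primrec fun p : ℕ × (ℕ × ℕ × ℕ) × ℕ => p.1 := Primrec.fst
  have s : Primrec fun p : ℕ × (ℕ × ℕ × ℕ) × ℕ => p.2.1 := Primrec.fst.comp Primrec.snd
  have b : Primrec fun p : ℕ × (ℕ × ℕ × ℕ) × ℕ => p.2.2 := Primrec.snd.comp Primrec.snd
  have s0 := Primrec.fst.comp s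
  have s1 := Primrec.fst.comp (Primrec.snd.comp s)
  have s2 := Primrec.snd.comp (Primrec.snd.comp s)
  have tag := Primrec.fst.comp (Primrec.unpair.comp i)
  have arg := Primrec.snd.comp (Primrec.unpair.comp i)
  have br0 := Primrec.fst.comp (Primrec.unpair.comp arg)
  have br := Primrec.unpair.comp (Primrec.snd.comp (Primrec.unpair.comp arg))
  have s0' := Primrec.succ.comp s0
  have iz : ∀ {α : Type} [Primcodable α] {f : ℕ × (ℕ × ℕ × ℕ) × ℕ → ℕ}
      {u v : ℕ × (ℕ × ℕ × ℕ) × ℕ → α} (m : ℕ), Primrec f → Primrec u → Primrec v →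
      Primrec fun p => if f p = m then u p else v p :=
    fun m hf hu hv => Primrec.ite (Primrec.eq.comp hf (Primrec.const m)) hu hv
  have sm : ∀ {f g h : ℕ × (ℕ × ℕ × ℕ) × ℕ → ℕ}, Primrec f → Primrec g → Primrec h →
      Primrec fun p => some (f p, g p, h p) :=
    fun hf hg hh => Primrec.option_some.comp (Primrec.pair hf (Primrec.pair hg hh))
  refine iz 1 tag (iz 0 arg (sm s0' (Primrec.succ.comp s1) s2) (sm s0' s1 (Primrec.succ.comp s2)))
    (iz 2 tag (iz 0 arg (iz 0 s1 (Primrec.const _) (sm s0' (Primrec.pred.comp s1) s2))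
      (iz 0 s2 (Primrec.const _) (sm s0' s1 (Primrec.pred.comp s2))))
    (iz 3 tag (iz 0 (iz 0 br0 s1 s2) (sm s0' s1 s2)
      (iz 0 b (sm (Primrec.fst.comp br) s1 s2) (sm (Primrec.snd.comp br) s1 s2)))
      (Primrec.const _)))

/-- One step of the program with instruction codes `L`. -/
def simS (L : List ℕ) (o : Option (ℕ × ℕ × ℕ)) (b : ℕ) : Option (ℕ × ℕ × ℕ) :=
  o.bind fun s => (L[s.1]?).bind fun i => execI i s b

theorem simS_primrec :
    Primrec fun p : List ℕ × Option (ℕ × ℕ × ℕ) × ℕ => simS p.1 p.2.1 p.2.2 := by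
  refine Primrec.option_bind (Primrec.fst.comp Primrec.snd) ?_
  refine Primrec.option_bind (f := fun x : (List ℕ × Option (ℕ × ℕ × ℕ) × ℕ) × ℕ × ℕ × ℕ =>
    x.1.1[x.2.1]?) ?_ ?_
  · exact Primrec.list_getElem?.comp (Primrec.fst.comp Primrec.fst) (Primrec.fst.comp Primrec.snd)
  · exact execI_primrec.comp (Primrec.pair Primrec.snd (Primrec.pair
      (Primrec.snd.comp Primrec.fst)
      (Primrec.snd.comp (Primrec.snd.comp (Primrec.fst.comp Primrec.fst)))))

/-- The location and the first two counter values of a configuration. -/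
def absC (c : Config) : ℕ × ℕ × ℕ := (c.loc, c.cnt 0, c.cnt 1)

theorem counters_lt {M : CM} (hM : M.WellFormed) (h2 : M.numCounters = 2) {n : ℕ} {i : Instr}
    (h : M.prog[n]? = some i) {k : ℕ} (hk : k ∈ i.counters) : k = 0 ∨ k = 1 := by
  have := hM.1 i (List.mem_of_getElem? h) k hk
  omega

theorem simS_of_step {M : CM} (hM : M.WellFormed) (h2 : M.numCounters = 2) {c c' : Config}
    (h : Step M c c') :
    ∃ b, simS (M.prog.map Instr.code) (some (absC c)) b = some (absC c') := by
  unfold Step at h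
  cases hi : M.prog[c.loc]? with
  | none => simp [hi] at h
  | some i =>
    rw [hi] at h
    have hc : ∀ k ∈ i.counters, k = 0 ∨ k = 1 := fun k => counters_lt hM h2 hi
    cases i with
    | halt => exact h.elim
    | inc k =>
      obtain rfl | rfl := hc k (by simp [Instr.counters]) <;> simp only at h <;> subst h <;>
        exact ⟨0, by simp [simS, absC, hi, execI, Instr.code]⟩
    | dec k =>
      obtain rfl | rfl := hc k (by simp [Instr.counters]) <;> simp only at h <;>
        obtain ⟨h0, rfl⟩ := h <;>
        exact ⟨0, by simp [simS, absC, hi, execI, Instr.code, h0.ne']⟩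
    | branch k i j =>
      obtain rfl | rfl := hc k (by simp [Instr.counters]) <;> simp only at h <;>
        obtain ⟨h0, rfl | rfl⟩ | ⟨h0, rfl⟩ := h <;>
        first
          | (refine ⟨0, ?_⟩; simp [simS, absC, hi, execI, Instr.code, h0]; done)
          | (refine ⟨1, ?_⟩; simp [simS, absC, hi, execI, Instr.code, h0])

theorem step_of_simS {M : CM} (hM : M.WellFormed) (h2 : M.numCounters = 2) {c : Config}
    {b : ℕ} {s : ℕ × ℕ × ℕ} (h : simS (M.prog.map Instr.code) (some (absC c)) b = some s) :
    ∃ c', Step M c c' ∧ absC c' = s := by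
  unfold Step
  cases hi : M.prog[c.loc]? with
  | none => simp [simS, absC, hi] at h
  | some i =>
    have hc : ∀ k ∈ i.counters, k = 0 ∨ k = 1 := fun k => counters_lt hM h2 hi
    cases i with
    | halt => simp [simS, absC, hi, execI, Instr.code] at h
    | inc k =>
      obtain rfl | rfl := hc k (by simp [Instr.counters]) <;>
        simp [simS, absC, hi, execI, Instr.code] at h <;>
        exact ⟨_, rfl, by simp [absC, ← h]⟩
    | dec k =>
      obtain rfl | rfl := hc k (by simp [Instr.counters]) <;>
        simp [simS, absC, hi, execI, Instr.code] at h <;>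
        exact ⟨_, ⟨Nat.pos_of_ne_zero h.1, rfl⟩, by simp [absC, ← h.2]⟩
    | branch k i j =>
      obtain rfl | rfl := hc k (by simp [Instr.counters]) <;>
        simp [simS, absC, hi, execI, Instr.code] at h <;> split_ifs at h with h0 hb <;>
        simp only [Option.some.injEq] at h <;>
        first
          | exact ⟨_, .inr ⟨h0, rfl⟩, h⟩
          | exact ⟨_, .inl ⟨h0, .inl rfl⟩, h⟩
          | exact ⟨_, .inl ⟨h0, .inr rfl⟩, h⟩

theorem reaches_iff {M : CM} (hM : M.WellFormed) (h2 : M.numCounters = 2) {s : ℕ × ℕ × ℕ} :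
    (∃ c, Reaches M c ∧ absC c = s) ↔
      ∃ l : List ℕ, l.foldl (simS (M.prog.map Instr.code)) (some (0, 0, 0)) = some s := by
  constructor
  · rintro ⟨c, hc, rfl⟩
    induction hc with
    | refl => exact ⟨[], rfl⟩
    | tail _ h ih =>
      obtain ⟨l, hl⟩ := ih
      obtain ⟨b, hb⟩ := simS_of_step hM h2 h
      exact ⟨l ++ [b], by rw [List.foldl_append, hl]; exact hb⟩
  · rintro ⟨l, hl⟩
    induction l using List.reverseRecOn generalizing s with
    | nil =>
      simp only [List.foldl_nil, Option.some.injEq] at hl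
      exact ⟨initConfig, .refl, hl⟩
    | append_singleton l b ih =>
      rw [List.foldl_append] at hl
      cases h : l.foldl (simS (M.prog.map Instr.code)) (some (0, 0, 0)) with
      | none => simp [h, simS] at hl
      | some s' =>
        obtain ⟨c, hc, rfl⟩ := ih h
        rw [h] at hl
        obtain ⟨c', hc', rfl⟩ := step_of_simS hM h2 hl
        exact ⟨c', hc.tail hc', rfl⟩

/-- The list with code `m`. -/
def lst (m : ℕ) : List ℕ := (Encodable.decode m).getD []

theorem lst_encode (l : List ℕ) : lst (Encodable.encode l) = l := by
  simp [lst]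

theorem lst_primrec : Primrec lst := Primrec.option_getD.comp Primrec.decode (Primrec.const [])

/-- Whether the `m`-th list of choices leads the machine coded in `n = ⟨M, β⟩` to a configuration
in which counter `0` exceeds `β`. -/
def testO (n m : ℕ) : Bool :=
  ((lst m).foldl
    (simS (lst n.unpair.1.unpair.2)) (some (0, 0, 0))).any
      fun s => decide (n.unpair.2 < s.2.1)

theorem testO_primrec : Primrec₂ testO := by
  have hL : Primrec fun p : ℕ × ℕ => lst p.1.unpair.1.unpair.2 :=
    lst_primrec.comp (Primrec.snd.comp (Primrec.unpair.comp
      (Primrec.fst.comp (Primrec.unpair.comp Primrec.fst))))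
  have hf : Primrec fun p : ℕ × ℕ => (lst p.2).foldl
      (simS (lst p.1.unpair.1.unpair.2)) (some (0, 0, 0)) := by
    refine Primrec.list_foldl (f := fun p : ℕ × ℕ => lst p.2) (g := fun _ => some (0, 0, 0))
      (h := fun p x => simS (lst p.1.unpair.1.unpair.2) x.1 x.2)
      (lst_primrec.comp Primrec.snd) (Primrec.const _) ?_
    exact simS_primrec.comp (Primrec.pair (hL.comp Primrec.fst) Primrec.snd)
  have hlt : PrimrecPred fun x : (ℕ × ℕ) × ℕ × ℕ × ℕ => x.1.1.unpair.2 < x.2.2.1 :=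
    Primrec.nat_lt.comp (Primrec.snd.comp (Primrec.unpair.comp (Primrec.fst.comp Primrec.fst)))
      (Primrec.fst.comp (Primrec.snd.comp Primrec.snd))
  have hd : Primrec₂ fun (p : ℕ × ℕ) (s : ℕ × ℕ × ℕ) => decide (p.1.unpair.2 < s.2.1) := hlt.decide
  refine (Primrec.option_casesOn hf (Primrec.const false) hd).of_eq fun p => ?_
  simp only [testO]
  cases (lst p.2).foldl (simS (lst p.1.unpair.1.unpair.2)) (some (0, 0, 0)) <;> rfl

/-- The bounded counter problem for two counters is recursively enumerable. -/
theorem overflows_re : ∃ g : ℕ →. ℕ, Nat.Partrec g ∧ ∀ (M : CM) (β : ℕ), M.WellFormed →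
    M.numCounters = 2 → ((g (Nat.pair M.code β)).Dom ↔ Overflows M β) := by
  refine ⟨fun n => Nat.rfind (fun m => Part.some (testO n m) : ℕ →. Bool),
    Partrec.nat_iff.1 (Partrec.rfind testO_primrec.to_comp.partrec₂), fun M β hM h2 => ?_⟩
  have hL : lst (Nat.pair M.code β).unpair.1.unpair.2 =
      M.prog.map Instr.code := by
    simp [CM.code, listCode_eq, lst_encode]
  have ht : ∀ m, testO (Nat.pair M.code β) m = true ↔ ∃ s, (lst m).foldl
      (simS (M.prog.map Instr.code)) (some (0, 0, 0)) = some s ∧ β < s.2.1 := by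
    intro m
    rw [testO, hL]
    cases (lst m).foldl
      (simS (M.prog.map Instr.code)) (some (0, 0, 0)) <;> simp
  refine Nat.rfind_dom'.trans ?_
  constructor
  · rintro ⟨m, hm, -⟩
    obtain ⟨s, hs, hβ⟩ := (ht m).1 (Part.mem_some_iff.1 hm).symm
    obtain ⟨c, hc, rfl⟩ := (reaches_iff hM h2).2 ⟨_, hs⟩
    exact ⟨c, hc, hβ⟩
  · rintro ⟨c, hc, hβ⟩
    obtain ⟨l, hl⟩ := (reaches_iff hM h2).1 ⟨c, hc, rfl⟩
    refine ⟨Encodable.encode l, ?_, fun _ => trivial⟩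
    have := (ht (Encodable.encode l)).2 ⟨_, by rw [lst_encode]; exact hl, hβ⟩
    exact Part.mem_some_iff.2 this.symm

end effective

end StackRed

/-- **Lemma 2.** There is a total computable map taking each pair `(M, β)` (`M`
a nondeterministic 2-counter machine, `β ∈ ℕ`) to an MTL formula `Φ_{M,β}` such
that `Φ_{M,β}` has a continuous-semantics model over `ℝ≥0` whose variability is
not bounded by `β/1` iff counter `v₀` exceeds `β` at some point of some
computation of `M`.  Consequently `B` is Π⁰₁-hard (coRE-hard): every Π⁰₁ set
many-one reduces to `B`. -/
theorem stmt3 :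
    (∃ F : CM × ℕ → MTL,
      (∃ f : ℕ → ℕ, Computable f ∧
        ∀ (M : CM) (β : ℕ), f (Nat.pair M.code β) = (F (M, β)).code) ∧
      ∀ (M : CM) (β : ℕ), M.WellFormed → M.numCounters = 2 →
        ((∃ ω : TimedWord, Models ω (F (M, β)) ∧ ¬ BddVar ω β (1 : ℝ)) ↔
          Overflows M β)) ∧
    (∀ A : Set ℕ, Pi01 A → ManyOneRed A Bset) := by
  constructor
  · obtain ⟨g, hg, hgO⟩ := StackRed.overflows_re
    obtain ⟨Φ, hc, hs, hk⟩ := StackRed.exists_formula hg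
    refine ⟨fun p => Φ (Nat.pair p.1.code p.2), ⟨_, hc, fun M β => rfl⟩, fun M β hM h2 => ?_⟩
    rw [← hgO M β hM h2]
    exact ⟨fun ⟨ω, h, _⟩ => hs _ ω h, fun h => hk _ h β⟩
  · rintro A ⟨g, hg, hA⟩
    obtain ⟨Φ, hc, hs, hk⟩ := StackRed.exists_formula hg
    -- No word has variability bounded by `0/1`, so `(φ, 0, 1) ∈ B` iff `φ` is unsatisfiable.
    refine ⟨fun n => Nat.pair (Φ n).code (Nat.pair 0 1),
      Primrec₂.natPair.to_comp.comp hc (Computable.const _), fun n => ⟨fun hn => ?_, ?_⟩⟩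
    · refine ⟨Φ n, 0, 1, rfl, fun ω h => ?_⟩
      exact absurd hn ((hA n).2 (hs n ω h))
    · rintro ⟨φ, v, V, he, hB⟩
      simp only [Nat.pair_eq_pair] at he
      obtain ⟨h1, rfl, rfl⟩ := he
      by_contra hn
      obtain ⟨ω, hω, hb⟩ := hk n ((hA n).1 hn) 0
      rw [StackRed.code_injective h1] at hω
      exact hb (by simpa using hB ω hω)
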